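/- arXiv:1802.04214 — 2 statements merged into one kernel-verified Lean document; each statement's English description precedes it below -/
import Mathlib

section
/- The possible sizes of minimal 1-saturating sets in PG(4,2) are exactly 9, 10, 11 and 16: a natural number k is the cardinality of some minimal 1-saturating set of nonzero vectors of (ZMod 2)^5 if and only if k ∈ {9, 10, 11, 16}. -/
/-- Points of PG(n-1,2) are the nonzero vectors of `Fin n → ZMod 2`.
A set `S` of nonzero vectors is 1-saturating if every nonzero vector `x ∉ S`
is the sum of two distinct elements of `S`. -/
def Saturating {n : ℕ} (S : Set (Fin n → ZMod 2)) : Prop :=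
  (∀ s ∈ S, s ≠ 0) ∧
    ∀ x : Fin n → ZMod 2, x ≠ 0 → x ∉ S →
      ∃ a ∈ S, ∃ b ∈ S, a ≠ b ∧ x = a + b

/-- A minimal 1-saturating set: 1-saturating, and removing any point destroys saturation. -/
def MinSat {n : ℕ} (S : Set (Fin n → ZMod 2)) : Prop :=
  Saturating S ∧ ∀ s ∈ S, ¬ Saturating (S \ {s})

/-- A cap: a set of nonzero vectors no three pairwise distinct elements of which sum to zero. -/
def IsCap {n : ℕ} (S : Set (Fin n → ZMod 2)) : Prop :=
  (∀ s ∈ S, s ≠ 0) ∧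
    ∀ a ∈ S, ∀ b ∈ S, ∀ c ∈ S, a ≠ b → a ≠ c → b ≠ c → a + b + c ≠ 0

/-- A complete cap: a cap that is 1-saturating. -/
def CompleteCap {n : ℕ} (S : Set (Fin n → ZMod 2)) : Prop :=
  IsCap S ∧ Saturating S

/-- Projective equivalence: some element of GL(n, ZMod 2) maps `S` onto `T`. -/
def ProjEquiv {n : ℕ} (S T : Set (Fin n → ZMod 2)) : Prop :=
  ∃ g : Matrix.GeneralLinearGroup (Fin n) (ZMod 2),
    (fun x => Matrix.mulVec (g : Matrix (Fin n) (Fin n) (ZMod 2)) x) '' S = T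

/-!
Adding the zero vector to `S` gives a set `W` for which minimal 1-saturation is a condition on the
autocorrelation `r z`, the number of ordered pairs from `W` with sum `z`: every `r z` is positive,
hence at least `2` as it is even for `z ≠ 0`, and every nonzero element of `W` takes part in a
*unique sum*, a `z ≠ 0` with `r z = 2`. Up to the role of the vector zero this is invariant under
translation, and the squares of the Walsh transform of `W` are the Fourier transform of `r`.

* If there is a unique sum `z`, then `W` and `W + z` meet in two points, so `#W ≤ 17`. Counting
  pairs gives `#W ≥ 9`.
* If `#W` is odd, translate `W` so that its elements sum to zero; then one side of each hyperplane
  contains an even number of its points. For `#W = 9` the two sides are moreover so balanced that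
  the Walsh transform takes only the values `1` and `-3` away from zero, which contradicts its
  first two moments.
* If `13 ≤ #W ≤ 16`, no hyperplane has ten or more points of `W` on one side: otherwise all unique
  sums would lie off the hyperplane, and the few points on the other side could not serve all of
  them. On the other hand two unique sums force a large value of the Walsh transform, which rules
  out the sizes from `14` to `16`.
* If `#W = 13`, the Walsh transform takes only the values `5`, `1` and `-3` away from zero. Its
  second and fourth moments then show that there are exactly six unique sums and that `r z ≤ 6` for
  `z ≠ 0`. At most one unique sum can be parallel to a hyperplane of Walsh value `5`, so the six
  unique sums involve at most seven of the nine points on one of its sides, while only the vector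
  playing the role of zero may be left out.
-/

open Finset
open scoped Matrix Pointwise

namespace BinarySaturating

section Autocorrelation

variable {G : Type*} [AddCommGroup G] [DecidableEq G] {W A T : Finset G} {s t u w x z : G}

/-- The autocorrelation of `W` at `z`: in characteristic two, the number of ordered pairs of
elements of `W` with sum `z`, counted by their first entry. -/
def autocorr (W : Finset G) (z : G) : ℕ := #{w ∈ W | w + z ∈ W}

/-- The nonzero `x` that are the sum of exactly one unordered pair of elements of `W`. -/
def uniqueSums [Fintype G] (W : Finset G) : Finset G := {x | x ≠ 0 ∧ autocorr W x = 2}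

/-- Every element is a sum of two, not necessarily distinct, elements of `W`. In characteristic two
and for `0 ∈ W` this says that `W \ {0}` is 1-saturating. -/
def Covers (W : Finset G) : Prop := ∀ x, ∃ a ∈ W, a + x ∈ W

/-- `W` is critical relative to `u` if every element is a sum of two elements of `W`, but every
`s ≠ u` in `W` takes part in the only representation of some nonzero sum. For `u = 0` this says
that `W \ {0}` is a minimal 1-saturating set; allowing any `u` makes the notion invariant under
translation. -/
structure IsCritical (W : Finset G) (u : G) : Prop where
  covers : Covers W
  exists_unique_sum : ∀ s ∈ W, s ≠ u → ∃ x, s + x ∈ W ∧ x ≠ 0 ∧ autocorr W x = 2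

instance [Fintype G] : Decidable (IsCritical W u) :=
  decidable_of_iff ((∀ x, ∃ a ∈ W, a + x ∈ W) ∧
      ∀ s ∈ W, s ≠ u → ∃ x, s + x ∈ W ∧ x ≠ 0 ∧ autocorr W x = 2)
    ⟨fun h ↦ ⟨h.1, h.2⟩, fun h ↦ ⟨h.1, h.2⟩⟩

lemma autocorr_zero : autocorr W 0 = #W := by simp [autocorr]

lemma mem_uniqueSums [Fintype G] : x ∈ uniqueSums W ↔ x ≠ 0 ∧ autocorr W x = 2 := by
  simp [uniqueSums]

lemma autocorr_mono (h : A ⊆ W) : autocorr A z ≤ autocorr W z :=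
  card_le_card fun w ↦ by simpa using fun hw hwz ↦ ⟨h hw, h hwz⟩

lemma autocorr_vadd : autocorr (t +ᵥ W) z = autocorr W z := by
  rw [autocorr, autocorr, ← card_vadd_finset t {w ∈ W | w + z ∈ W}]
  congr 1
  ext w
  simp [← neg_vadd_mem_iff, add_assoc]

lemma Covers.vadd (h : Covers W) (t : G) : Covers (t +ᵥ W) := by
  intro x
  obtain ⟨a, ha, hax⟩ := h x
  refine ⟨t + a, vadd_mem_vadd_finset ha, ?_⟩
  simpa [add_assoc] using vadd_mem_vadd_finset (a := t) hax

lemma IsCritical.vadd (h : IsCritical W u) (t : G) : IsCritical (t +ᵥ W) (t + u) := by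
  refine ⟨h.covers.vadd t, fun s hs hsu ↦ ?_⟩
  obtain ⟨v, hv, rfl⟩ := mem_vadd_finset.1 hs
  obtain ⟨x, hvx, hx, hx2⟩ := h.exists_unique_sum v hv (by rintro rfl; simp at hsu)
  refine ⟨x, ?_, hx, by rwa [autocorr_vadd]⟩
  simpa [add_assoc] using vadd_mem_vadd_finset (a := t) hvx

lemma IsCritical.card_le_one_add_sum [Fintype G] (h : IsCritical W u) (hA : A ⊆ W) :
    #A ≤ 1 + ∑ x ∈ uniqueSums W, #{w ∈ A | w + x ∈ W} := by
  have hcov : A.erase u ⊆ (uniqueSums W).biUnion fun x ↦ {w ∈ A | w + x ∈ W} := by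
    intro s hs
    obtain ⟨hsu, hsA⟩ := mem_erase.1 hs
    obtain ⟨x, hsx, hx⟩ := h.exists_unique_sum s (hA hsA) hsu
    exact mem_biUnion.2 ⟨x, mem_uniqueSums.2 hx, by simp [hsA, hsx]⟩
  have := (card_le_card hcov).trans card_biUnion_le
  have := pred_card_le_card_erase (s := A) (a := u)
  omega

lemma IsCritical.card_le_one_add_two_mul [Fintype G] (h : IsCritical W u) :
    #W ≤ 1 + 2 * #(uniqueSums W) := by
  have hsum : ∑ x ∈ uniqueSums W, #{w ∈ W | w + x ∈ W} = #(uniqueSums W) * 2 :=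
    sum_const_nat fun x hx ↦ (mem_uniqueSums.1 hx).2
  have := h.card_le_one_add_sum subset_rfl
  omega

variable [Module (ZMod 2) G]

lemma even_autocorr (hz : z ≠ 0) : Even (autocorr W z) := by
  have h : ∑ w ∈ W with w + z ∈ W, (1 : ZMod 2) = 0 := by
    refine sum_involution (fun w _ ↦ w + z) (fun _ _ ↦ by decide) (fun w _ _ ↦ by simpa)
      (fun w hw ↦ ?_) (fun w _ ↦ by rw [add_assoc, ZModModule.add_self, add_zero])
    simpa [add_assoc, ZModModule.add_self, and_comm] using hw
  rwa [sum_const, nsmul_one, ZMod.natCast_eq_zero_iff_even] at h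

lemma Covers.two_le_autocorr (h : Covers W) (hz : z ≠ 0) : 2 ≤ autocorr W z := by
  obtain ⟨a, ha, haz⟩ := h z
  have hpos : 0 < autocorr W z := card_pos.2 ⟨a, by simp [ha, haz]⟩
  obtain ⟨k, hk⟩ := even_autocorr (W := W) hz
  omega

lemma eq_or_eq_add_of_autocorr_eq_two (hx : x ≠ 0) (hx2 : autocorr W x = 2) (hs : s ∈ W)
    (hsx : s + x ∈ W) (hw : w ∈ W) (hwx : w + x ∈ W) : w = s ∨ w = s + x := by
  have hsub : {s, s + x} ⊆ {w ∈ W | w + x ∈ W} := by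
    simp [insert_subset_iff, hs, hsx, add_assoc, ZModModule.add_self]
  have heq := eq_of_subset_of_card_le hsub (by rw [card_pair (by simpa using hx)]; exact hx2.le)
  simpa [← heq] using (show w ∈ {w ∈ W | w + x ∈ W} by simp [hw, hwx])

lemma not_covers_erase_iff (hW : Covers W) (hu : u ∈ W) (hs : s ∈ W) (hsu : s ≠ u) :
    ¬ Covers (W.erase s) ↔ ∃ x, s + x ∈ W ∧ x ≠ 0 ∧ autocorr W x = 2 := by
  have hadd {a x : G} : a + x = s ↔ a = s + x := by
    rw [← ZModModule.sub_eq_add s, eq_sub_iff_add_eq]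
  constructor
  · intro h
    simp only [Covers, not_forall, not_exists, not_and, mem_erase, and_imp, ne_eq] at h
    obtain ⟨x, hx⟩ := h
    have hx0 : x ≠ 0 := by
      rintro rfl
      exact hx u hsu.symm hu (by simpa using hsu.symm) (by simpa using hu)
    have hpair : {w ∈ W | w + x ∈ W} ⊆ {s, s + x} := by
      intro w hw
      obtain ⟨hwW, hwx⟩ := mem_filter.1 hw
      by_contra hne
      simp only [mem_insert, mem_singleton, not_or] at hne
      exact hx w hne.1 hwW (mt hadd.1 hne.2) hwx
    have hle : autocorr W x ≤ 2 := (card_le_card hpair).trans card_le_two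
    have htwo : autocorr W x = 2 := hle.antisymm (hW.two_le_autocorr hx0)
    obtain ⟨a, ha, hax⟩ := hW x
    obtain rfl | rfl : a = s ∨ a = s + x := by simpa using hpair (mem_filter.2 ⟨ha, hax⟩)
    exacts [⟨x, hax, hx0, htwo⟩, ⟨x, ha, hx0, htwo⟩]
  · rintro ⟨x, hsx, hx0, hx2⟩ h
    obtain ⟨a, ha, hax⟩ := h x
    rw [mem_erase] at ha hax
    obtain has | has := eq_or_eq_add_of_autocorr_eq_two hx0 hx2 hs hsx ha.2 hax.2
    exacts [ha.1 has, hax.1 (hadd.2 has)]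

/-- Inclusion-exclusion for `A` and `A + z` inside `T`. -/
lemma two_mul_card_le_add_autocorr (hA : A ⊆ T) (hT : ∀ w ∈ T, z + w ∈ T) :
    2 * #A ≤ #T + autocorr A z := by
  have hinter : A ∩ (z +ᵥ A) = {w ∈ A | w + z ∈ A} := by
    ext w
    simp [← neg_vadd_mem_iff, ZModModule.neg_eq_self, add_comm]
  have hunion : A ∪ (z +ᵥ A) ⊆ T := by
    refine union_subset hA fun w hw ↦ ?_
    obtain ⟨v, hv, rfl⟩ := mem_vadd_finset.1 hw
    exact hT v (hA hv)
  have := card_le_card hunion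
  have := card_union_add_card_inter A (z +ᵥ A)
  rw [hinter, card_vadd_finset] at this
  rw [autocorr]
  omega

lemma two_mul_card_le_of_mem_uniqueSums [Fintype G] (hx : x ∈ uniqueSums W) :
    2 * #W ≤ Fintype.card G + 2 := by
  have hle := two_mul_card_le_add_autocorr (z := x) (subset_univ W) fun _ _ ↦ mem_univ _
  rwa [(mem_uniqueSums.1 hx).2] at hle

lemma sum_sum_add [Fintype G] (f : G → ℤ) :
    ∑ a ∈ W, ∑ b ∈ W, f (a + b) = ∑ z, autocorr W z * f z := by
  simp only [autocorr, card_filter, Nat.cast_sum, sum_mul]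
  rw [sum_comm (s := univ)]
  refine sum_congr rfl fun a _ ↦ ?_
  rw [← Equiv.sum_comp (Equiv.addLeft a)]
  simp [← add_assoc, ZModModule.add_self]

lemma exists_sum_vadd_eq_zero (hW : Odd #W) : ∃ t : G, ∑ w ∈ t +ᵥ W, w = 0 := by
  obtain ⟨k, hk⟩ := hW
  refine ⟨∑ w ∈ W, w, ?_⟩
  rw [← image_vadd, sum_image fun _ _ _ _ h ↦ by simpa using h]
  simp only [vadd_eq_add]
  rw [sum_add_distrib, sum_const, hk]
  simp [add_smul, mul_comm 2, mul_smul, two_smul, ZModModule.add_self]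

end Autocorrelation

section Characters

variable {n : ℕ} {W : Finset (Fin n → ZMod 2)} {χ x y z : Fin n → ZMod 2} {c : ZMod 2}

/-- The nontrivial additive character of `ZMod 2`, with integer values. -/
def sgn (a : ZMod 2) : ℤ := if a = 0 then 1 else -1

/-- The Walsh transform of the indicator function of `W`. -/
def walsh (W : Finset (Fin n → ZMod 2)) (χ : Fin n → ZMod 2) : ℤ := ∑ w ∈ W, sgn (χ ⬝ᵥ w)

/-- The part of `W` on one of the two affine hyperplanes orthogonal to `χ ≠ 0`. -/
def side (W : Finset (Fin n → ZMod 2)) (χ : Fin n → ZMod 2) (c : ZMod 2) :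
    Finset (Fin n → ZMod 2) := {w ∈ W | χ ⬝ᵥ w = c}

lemma sgn_add : ∀ a b : ZMod 2, sgn (a + b) = sgn a * sgn b := by decide

lemma eq_or_eq_add_one : ∀ a c : ZMod 2, a = c ∨ a = c + 1 := by decide

lemma side_subset : side W χ c ⊆ W := filter_subset _ _

lemma card_side_add_card_side (W : Finset (Fin n → ZMod 2)) (χ : Fin n → ZMod 2) (c : ZMod 2) :
    #(side W χ c) + #(side W χ (c + 1)) = #W := by
  rw [← card_filter_add_card_filter_not (s := W) (χ ⬝ᵥ · = c), side, side]
  congr 3 with w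
  generalize χ ⬝ᵥ w = a
  decide +revert

lemma walsh_eq_card_sub_card (W : Finset (Fin n → ZMod 2)) (χ : Fin n → ZMod 2) :
    walsh W χ = #(side W χ 0) - #(side W χ 1) := by
  simp only [walsh, side, card_filter, Nat.cast_sum, ← sum_sub_distrib]
  refine sum_congr rfl fun w _ ↦ ?_
  generalize χ ⬝ᵥ w = a
  decide +revert

lemma walsh_eq_card_sub_two_mul (W : Finset (Fin n → ZMod 2)) (χ : Fin n → ZMod 2) :
    walsh W χ = #W - 2 * #(side W χ 1) := by
  have := card_side_add_card_side W χ 0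
  rw [zero_add] at this
  rw [walsh_eq_card_sub_card]
  omega

lemma walsh_zero : walsh W 0 = #W := by simp [walsh, sgn]

lemma sum_sgn_dotProduct (z : Fin n → ZMod 2) :
    ∑ χ : Fin n → ZMod 2, sgn (χ ⬝ᵥ z) = if z = 0 then 2 ^ n else 0 := by
  split_ifs with hz
  · simp [hz, sgn]
  · obtain ⟨i, hi⟩ := Function.ne_iff.1 hz
    have hflip : ∑ χ : Fin n → ZMod 2, sgn (χ ⬝ᵥ z) = ∑ χ : Fin n → ZMod 2, -sgn (χ ⬝ᵥ z) := by
      rw [← Equiv.sum_comp (Equiv.addRight (Pi.single i 1))]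
      refine sum_congr rfl fun χ _ ↦ ?_
      have : z i = 1 := (eq_or_eq_add_one (z i) 0).resolve_left hi
      simp [add_dotProduct, sgn_add, this, show sgn 1 = -1 from rfl]
    rw [sum_neg_distrib] at hflip
    omega

lemma two_mul_card_side_univ (hχ : χ ≠ 0) (c : ZMod 2) : 2 * #(side univ χ c) = 2 ^ n := by
  have hzero : walsh univ χ = 0 := by
    simp only [walsh, dotProduct_comm χ, sum_sgn_dotProduct, hχ, if_false]
  have hadd := card_side_add_card_side univ χ 0
  rw [walsh_eq_card_sub_card] at hzero
  simp only [zero_add, card_univ, Fintype.card_pi, ZMod.card, prod_const, Fintype.card_fin] at hadd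
  obtain rfl | rfl := eq_or_eq_add_one c 0
  · omega
  · rw [zero_add]
    omega

lemma walsh_sq (W : Finset (Fin n → ZMod 2)) (χ : Fin n → ZMod 2) :
    walsh W χ ^ 2 = ∑ z, autocorr W z * sgn (χ ⬝ᵥ z) := by
  rw [← sum_sum_add, walsh, sq, sum_mul_sum]
  simp only [dotProduct_add, sgn_add]

lemma sum_walsh (W : Finset (Fin n → ZMod 2)) :
    ∑ χ, walsh W χ = if 0 ∈ W then 2 ^ n else 0 := by
  simp only [walsh]
  rw [sum_comm]
  simp [sum_sgn_dotProduct]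

lemma sum_walsh_sq_mul_sgn (W : Finset (Fin n → ZMod 2)) (z : Fin n → ZMod 2) :
    ∑ χ, walsh W χ ^ 2 * sgn (χ ⬝ᵥ z) = 2 ^ n * autocorr W z := by
  simp only [walsh_sq, sum_mul, mul_assoc, ← sgn_add, ← dotProduct_add]
  rw [sum_comm]
  simp only [← mul_sum, sum_sgn_dotProduct, add_eq_zero_iff_eq_neg, ZModModule.neg_eq_self]
  simp [mul_comm]

lemma sum_walsh_sq (W : Finset (Fin n → ZMod 2)) : ∑ χ, walsh W χ ^ 2 = 2 ^ n * #W := by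
  simpa [sgn, autocorr_zero] using sum_walsh_sq_mul_sgn W 0

lemma sum_walsh_pow_four (W : Finset (Fin n → ZMod 2)) :
    ∑ χ, walsh W χ ^ 4 = 2 ^ n * ∑ z, (autocorr W z : ℤ) ^ 2 := by
  calc ∑ χ, walsh W χ ^ 4 = ∑ χ, ∑ z, autocorr W z * (walsh W χ ^ 2 * sgn (χ ⬝ᵥ z)) :=
        sum_congr rfl fun χ _ ↦ by
          rw [pow_mul _ 2 2, sq (walsh W χ ^ 2)]
          nth_rewrite 2 [walsh_sq]
          rw [mul_sum]
          exact sum_congr rfl fun z _ ↦ by ring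
    _ = 2 ^ n * ∑ z, (autocorr W z : ℤ) ^ 2 := by
      rw [sum_comm, mul_sum]
      exact sum_congr rfl fun z _ ↦ by rw [← mul_sum, sum_walsh_sq_mul_sgn]; ring

lemma sum_autocorr (W : Finset (Fin n → ZMod 2)) : ∑ z, autocorr W z = #W ^ 2 := by
  have := walsh_sq W 0
  simp only [walsh_zero, zero_dotProduct, sgn, if_true, mul_one] at this
  exact_mod_cast this.symm

lemma sum_autocorr_side_univ_one (W : Finset (Fin n → ZMod 2)) (χ : Fin n → ZMod 2) :
    ∑ y ∈ side univ χ 1, autocorr W y = 2 * (#(side W χ 0) * #(side W χ 1)) := by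
  have hsgn : ∀ a : ZMod 2, sgn a = 1 - if a = 1 then 2 else 0 := by decide
  have hsq : walsh W χ ^ 2 = #W ^ 2 - 2 * ∑ y ∈ side univ χ 1, (autocorr W y : ℤ) := by
    simp only [walsh_sq, hsgn, mul_sub, sum_sub_distrib, mul_one, mul_ite, mul_zero, side,
      ← sum_filter, ← sum_mul]
    rw [← Nat.cast_sum, sum_autocorr, Nat.cast_pow, mul_comm]
  rw [walsh_eq_card_sub_card, ← card_side_add_card_side W χ 0] at hsq
  zify
  push_cast [zero_add] at hsq
  linarith

lemma sum_walsh_sq_mul_one_add_sgn_mul (W : Finset (Fin n → ZMod 2)) (x y : Fin n → ZMod 2)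
    (ε : ℤ) :
    ∑ χ, walsh W χ ^ 2 * ((1 + ε * sgn (χ ⬝ᵥ x)) * (1 + ε * sgn (χ ⬝ᵥ y))) =
      2 ^ n * (#W + ε * (autocorr W x + autocorr W y) + ε ^ 2 * autocorr W (x + y)) := by
  have hexpand (χ : Fin n → ZMod 2) :
      walsh W χ ^ 2 * ((1 + ε * sgn (χ ⬝ᵥ x)) * (1 + ε * sgn (χ ⬝ᵥ y))) =
        walsh W χ ^ 2 + ε * (walsh W χ ^ 2 * sgn (χ ⬝ᵥ x)) + ε * (walsh W χ ^ 2 * sgn (χ ⬝ᵥ y)) +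
          ε ^ 2 * (walsh W χ ^ 2 * sgn (χ ⬝ᵥ (x + y))) := by
    rw [dotProduct_add, sgn_add]; ring
  simp only [hexpand, sum_add_distrib, ← mul_sum, sum_walsh_sq, sum_walsh_sq_mul_sgn]
  ring

lemma sum_one_add_sgn_mul (hx : x ≠ 0) (hy : y ≠ 0) (hxy : x ≠ y) (ε : ℤ) :
    ∑ χ : Fin n → ZMod 2, (1 + ε * sgn (χ ⬝ᵥ x)) * (1 + ε * sgn (χ ⬝ᵥ y)) = 2 ^ n := by
  have hadd : x + y ≠ 0 := by rwa [ne_eq, add_eq_zero_iff_eq_neg, ZModModule.neg_eq_self]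
  have hexpand (χ : Fin n → ZMod 2) : (1 + ε * sgn (χ ⬝ᵥ x)) * (1 + ε * sgn (χ ⬝ᵥ y)) =
      1 + ε * sgn (χ ⬝ᵥ x) + ε * sgn (χ ⬝ᵥ y) + ε ^ 2 * sgn (χ ⬝ᵥ (x + y)) := by
    rw [dotProduct_add, sgn_add]; ring
  simp only [hexpand, sum_add_distrib, ← mul_sum, sum_sgn_dotProduct, hx, hy, hadd, if_false]
  simp

lemma even_card_side_one (hW : ∑ w ∈ W, w = 0) (χ : Fin n → ZMod 2) : Even #(side W χ 1) := by
  rw [← ZMod.natCast_eq_zero_iff_even, side, card_filter, Nat.cast_sum]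
  calc ∑ w ∈ W, ((if χ ⬝ᵥ w = 1 then 1 else 0 : ℕ) : ZMod 2) = ∑ w ∈ W, χ ⬝ᵥ w :=
        sum_congr rfl fun w _ ↦ by generalize χ ⬝ᵥ w = a; decide +revert
    _ = 0 := by rw [← dotProduct_sum, hW, dotProduct_zero]

lemma four_mul_card_side_le (hχ : χ ≠ 0) (hx : χ ⬝ᵥ x = 0) :
    4 * #(side W χ c) ≤ 2 ^ n + 2 * autocorr (side W χ c) x := by
  have := two_mul_card_le_add_autocorr (A := side W χ c) (T := side univ χ c) (z := x)
    (filter_subset_filter _ (subset_univ W)) fun w hw ↦ by simpa [side, dotProduct_add, hx] using hw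
  have := two_mul_card_side_univ hχ c
  omega

/-- Translation by `x` swaps the two sides, so each pair with sum `x` has one entry on each. -/
lemma autocorr_eq_two_mul_card (hx : χ ⬝ᵥ x = 1) (c : ZMod 2) :
    autocorr W x = 2 * #{w ∈ side W χ c | w + x ∈ W} := by
  set D := {w ∈ W | w + x ∈ W}
  have hswap : side D χ (c + 1) = x +ᵥ side D χ c := by
    ext w
    have hc (a : ZMod 2) : a = c + 1 ↔ a + 1 = c := by decide +revert
    simp [side, D, ← neg_vadd_mem_iff, ZModModule.neg_eq_self, dotProduct_add, hx, add_comm x,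
      add_assoc, ZModModule.add_self, and_comm, hc]
  have hside : {w ∈ side W χ c | w + x ∈ W} = side D χ c := filter_comm ..
  rw [hside, autocorr, ← card_side_add_card_side D χ c, hswap, card_vadd_finset, two_mul]

lemma card_side_mul_card_side (W : Finset (Fin n → ZMod 2)) (χ : Fin n → ZMod 2) (c : ZMod 2) :
    #(side W χ c) * #(side W χ (c + 1)) = #(side W χ 0) * #(side W χ 1) := by
  obtain rfl | rfl := eq_or_eq_add_one c 0
  · rw [zero_add]
  · rw [mul_comm, add_assoc, ZModModule.add_self, add_zero, zero_add]

lemma Covers.two_pow_le_two_mul (hW : Covers W) (hχ : χ ≠ 0) (c : ZMod 2) :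
    2 ^ n ≤ 2 * (#(side W χ c) * #(side W χ (c + 1))) := by
  rw [card_side_mul_card_side, ← sum_autocorr_side_univ_one, ← two_mul_card_side_univ hχ 1,
    mul_comm, ← smul_eq_mul]
  refine card_nsmul_le_sum _ _ _ fun y hy ↦ hW.two_le_autocorr ?_
  rintro rfl
  simp [side] at hy

lemma Covers.two_mul_two_pow_le (hW : Covers W) : 2 * 2 ^ n + #W ≤ #W ^ 2 + 2 := by
  have hsum : #((univ : Finset (Fin n → ZMod 2)).erase 0) • 2 ≤
      ∑ z ∈ univ.erase 0, autocorr W z :=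
    card_nsmul_le_sum _ _ _ fun z hz ↦ hW.two_le_autocorr (ne_of_mem_erase hz)
  have htotal := sum_erase_add univ (autocorr W) (mem_univ 0)
  rw [sum_autocorr, autocorr_zero] at htotal
  simp only [card_erase_of_mem (mem_univ _), card_univ, Fintype.card_pi, ZMod.card, prod_const,
    Fintype.card_fin, smul_eq_mul] at hsum
  omega

lemma card_filter_side_eq_one (hx : x ∈ uniqueSums W) (hχx : χ ⬝ᵥ x = 1) (c : ZMod 2) :
    #{w ∈ side W χ c | w + x ∈ W} = 1 := by
  have := autocorr_eq_two_mul_card (W := W) hχx c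
  rw [(mem_uniqueSums.1 hx).2] at this
  omega

/-- In dimension five, `1` and `-3` are the values of the Walsh transform away from zero when
`#W = 9`, and all of them except `5` when `#W = 13`, if the elements of `W` sum to zero. -/
lemma sum_walsh_sub_one_mul_add_three (W : Finset (Fin n → ZMod 2)) :
    ∑ χ ∈ univ.erase 0, (walsh W χ - 1) * (walsh W χ + 3) =
      2 ^ n * (#W - 3 + if 0 ∈ W then 2 else 0) - (#W - 1) * (#W + 3) := by
  have hexpand (χ) : (walsh W χ - 1) * (walsh W χ + 3) = walsh W χ ^ 2 + 2 * walsh W χ - 3 := by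
    ring
  rw [sum_erase_eq_sub (mem_univ 0)]
  simp only [hexpand, sum_sub_distrib, sum_add_distrib, ← mul_sum, sum_walsh_sq, sum_walsh,
    walsh_zero, sum_const, card_univ, Fintype.card_pi, ZMod.card, prod_const, Fintype.card_fin,
    nsmul_eq_mul]
  split_ifs <;> push_cast <;> ring

lemma one_add_sgn_mul_nonneg {ε : ℤ} (hε : ε = 1 ∨ ε = -1) :
    ∀ a b : ZMod 2, 0 ≤ (1 + ε * sgn a) * (1 + ε * sgn b) := by
  obtain rfl | rfl := hε <;> decide

/-- Compare the two choices of `ε` in `sum_walsh_sq_mul_one_add_sgn_mul`: the weights of `ε = 1`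
see the value at `0`, those of `ε = -1` do not. -/
lemma exists_card_sq_le_walsh_sq (hx : x ∈ uniqueSums W) (hy : y ∈ uniqueSums W) (hxy : x ≠ y) :
    ∃ χ ≠ 0, 4 * (#W : ℤ) ^ 2 ≤ 2 ^ n * walsh W χ ^ 2 + 8 * 2 ^ n := by
  obtain ⟨hx0, hx2⟩ := mem_uniqueSums.1 hx
  obtain ⟨hy0, hy2⟩ := mem_uniqueSums.1 hy
  by_contra! hsmall
  have hplus := sum_walsh_sq_mul_one_add_sgn_mul W x y 1
  have hminus := sum_walsh_sq_mul_one_add_sgn_mul W x y (-1)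
  rw [hx2, hy2] at hplus hminus
  have hlower : walsh W 0 ^ 2 * ((1 + 1 * sgn (0 ⬝ᵥ x)) * (1 + 1 * sgn (0 ⬝ᵥ y))) ≤ _ :=
    (single_le_sum (fun χ _ ↦ mul_nonneg (sq_nonneg (walsh W χ))
      (one_add_sgn_mul_nonneg (.inl rfl) (χ ⬝ᵥ x) (χ ⬝ᵥ y))) (mem_univ 0)).trans_eq hplus
  have hupper :
      2 ^ n * ∑ χ, walsh W χ ^ 2 * ((1 + -1 * sgn (χ ⬝ᵥ x)) * (1 + -1 * sgn (χ ⬝ᵥ y))) ≤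
        ∑ χ : Fin n → ZMod 2, (4 * (#W : ℤ) ^ 2 - 8 * 2 ^ n - 1) *
          ((1 + -1 * sgn (χ ⬝ᵥ x)) * (1 + -1 * sgn (χ ⬝ᵥ y))) := by
    rw [mul_sum]
    refine sum_le_sum fun χ _ ↦ ?_
    rw [← mul_assoc]
    obtain rfl | hχ := eq_or_ne χ 0
    · simp [sgn]
    · exact mul_le_mul_of_nonneg_right (by linarith [Int.add_one_le_of_lt (hsmall χ hχ)])
        (one_add_sgn_mul_nonneg (.inr rfl) _ _)
  rw [← mul_sum, sum_one_add_sgn_mul hx0 hy0 hxy, hminus] at hupper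
  simp only [walsh_zero, zero_dotProduct, sgn, if_true] at hlower
  rw [mul_comm (2 ^ n : ℤ)] at hupper
  have hupper := le_of_mul_le_mul_right hupper (by positivity)
  push_cast at hlower hupper
  linarith

end Characters

section LargeSide

variable {n : ℕ} {W : Finset (Fin n → ZMod 2)} {u χ x : Fin n → ZMod 2} {c : ZMod 2}

lemma dotProduct_eq_one_of_mem_uniqueSums (hχ : χ ≠ 0) (hA : 2 ^ n + 4 < 4 * #(side W χ c))
    (hx : x ∈ uniqueSums W) : χ ⬝ᵥ x = 1 := by
  refine (eq_or_eq_add_one (χ ⬝ᵥ x) 0).resolve_left fun h0 ↦ ?_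
  have := four_mul_card_side_le (W := W) (c := c) hχ h0
  have := autocorr_mono (z := x) (side_subset (W := W) (χ := χ) (c := c))
  have := (mem_uniqueSums.1 hx).2
  omega

lemma IsCritical.card_side_le_one_add (h : IsCritical W u) (hχ : χ ≠ 0)
    (hA : 2 ^ n + 4 < 4 * #(side W χ c)) : #(side W χ c) ≤ 1 + #(uniqueSums W) := by
  refine (h.card_le_one_add_sum side_subset).trans_eq ?_
  rw [sum_congr rfl fun x hx ↦
    card_filter_side_eq_one hx (dotProduct_eq_one_of_mem_uniqueSums hχ hA hx) c, card_eq_sum_ones]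

lemma card_mul_card_add_le (hχ : χ ≠ 0) (hA : 2 ^ n + 4 < 4 * #(side W χ c)) :
    2 * (#(side W χ c) * #(side W χ (c + 1)) + #(side W χ (c + 1)) * #(uniqueSums W)) ≤
      2 * #(uniqueSums W) + 2 ^ n * #(side W χ (c + 1)) := by
  have hsub : uniqueSums W ⊆ side univ χ 1 := fun x hx ↦ by
    simpa [side] using dotProduct_eq_one_of_mem_uniqueSums hχ hA hx
  have hin : ∑ y ∈ uniqueSums W, autocorr W y = #(uniqueSums W) * 2 :=
    sum_const_nat fun y hy ↦ (mem_uniqueSums.1 hy).2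
  have hout : ∑ y ∈ side univ χ 1 \ uniqueSums W, autocorr W y ≤
      #(side univ χ 1 \ uniqueSums W) • (2 * #(side W χ (c + 1))) := by
    refine sum_le_card_nsmul _ _ _ fun y hy ↦ ?_
    have hy1 : χ ⬝ᵥ y = 1 := by simpa [side] using (mem_sdiff.1 hy).1
    rw [autocorr_eq_two_mul_card hy1 (c + 1)]
    exact Nat.mul_le_mul_left 2 (card_le_card (filter_subset _ _))
  have htotal := sum_sdiff hsub (f := autocorr W)
  have hcard := card_sdiff_add_card_eq_card hsub
  have huniv := two_mul_card_side_univ hχ 1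
  rw [sum_autocorr_side_univ_one, hin] at htotal
  rw [← card_side_mul_card_side W χ c] at htotal
  rw [← hcard] at huniv
  rw [smul_eq_mul] at hout
  nlinarith

/-- The only representation of some sum that uses `a` pairs it with a point `b` across. -/
lemma IsCritical.exists_forall_add_notMem (h : IsCritical W u) (hχ : χ ≠ 0)
    (hA : 2 ^ n + 4 < 4 * #(side W χ c)) {a : Fin n → ZMod 2} (ha : a ∈ side W χ c) (hau : a ≠ u) :
    ∃ b ∈ side W χ (c + 1), ∀ b' ∈ side W χ (c + 1), b' ≠ b → a + (b + b') ∉ W := by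
  obtain ⟨haW, hac⟩ := mem_filter.1 ha
  obtain ⟨x, hax, hx⟩ := h.exists_unique_sum a haW hau
  have hχx : χ ⬝ᵥ x = 1 := dotProduct_eq_one_of_mem_uniqueSums hχ hA (mem_uniqueSums.2 hx)
  refine ⟨a + x, by simp [side, hax, dotProduct_add, hac, hχx], fun b' hb' hne hmem ↦ ?_⟩
  obtain ⟨hbW, hbc⟩ := mem_filter.1 hb'
  have hbx : b' + x ∈ W := by
    rwa [← add_assoc, ← add_assoc, ZModModule.add_self, zero_add, add_comm] at hmem
  obtain rfl | hb := eq_or_eq_add_of_autocorr_eq_two hx.1 hx.2 haW hax hbW hbx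
  · simp [hac] at hbc
  · exact hne hb

lemma IsCritical.add_notMem_side (h : IsCritical W u) (hχ : χ ≠ 0)
    (hA : 2 ^ n + 4 < 4 * #(side W χ c)) {a b₁ b₂ b₃ : Fin n → ZMod 2} (h₁₂ : b₁ ≠ b₂)
    (h₁₃ : b₁ ≠ b₃) (h₂₃ : b₂ ≠ b₃) (hB : side W χ (c + 1) = {b₁, b₂, b₃})
    (ha : a ∈ side W χ c) (ha₁₂ : a + (b₁ + b₂) ∈ side W χ c) : a + (b₁ + b₃) ∉ side W χ c := by
  intro ha₁₃
  wlog hau : a ≠ u generalizing a b₁ b₂ b₃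
  · obtain rfl : a = u := not_not.1 hau
    have hback : a + (b₁ + b₂) + (b₂ + b₁) = a := by
      rw [add_comm b₂, add_assoc, ZModModule.add_self, add_zero]
    have hacross : a + (b₁ + b₂) + (b₂ + b₃) = a + (b₁ + b₃) := by
      rw [add_assoc, ZModModule.add_add_add_cancel]
    have hmoved : a + (b₁ + b₂) ≠ a := by
      simpa [add_eq_zero_iff_eq_neg, ZModModule.neg_eq_self] using h₁₂
    exact this h₁₂.symm h₂₃ h₁₃ (by rw [hB, insert_comm]) ha₁₂ (by rwa [hback]) (by rwa [hacross])
      hmoved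
  obtain ⟨b, hb, hb'⟩ := h.exists_forall_add_notMem hχ hA ha hau
  simp only [hB, mem_insert, mem_singleton] at hb hb'
  obtain rfl | rfl | rfl := hb
  · exact hb' b₂ (by simp) h₁₂.symm (side_subset ha₁₂)
  · exact hb' b₁ (by simp) h₁₂ (add_comm b₁ b ▸ side_subset ha₁₂)
  · exact hb' b₁ (by simp) h₁₃ (add_comm b₁ b ▸ side_subset ha₁₃)

end LargeSide

section FiveDimensional

variable {W : Finset (Fin 5 → ZMod 2)} {u χ x y : Fin 5 → ZMod 2} {c : ZMod 2}

lemma IsCritical.card_le_seventeen (h : IsCritical W u) : #W ≤ 17 := by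
  obtain hX | ⟨x, hx⟩ := (uniqueSums W).eq_empty_or_nonempty
  · have := h.card_le_one_add_two_mul
    simp only [hX, card_empty] at this
    omega
  · have hle := two_mul_card_le_of_mem_uniqueSums hx
    simp only [Fintype.card_pi, ZMod.card, prod_const, card_univ, Fintype.card_fin] at hle
    omega

lemma Covers.nine_le_card (hW : Covers W) : 9 ≤ #W := by
  have := hW.two_mul_two_pow_le
  by_contra! hlt
  interval_cases #W <;> omega

lemma Covers.sixteen_le_card_mul_card (hW : Covers W) (hχ : χ ≠ 0) (c : ZMod 2) :
    16 ≤ #(side W χ c) * #(side W χ (c + 1)) := by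
  have := hW.two_pow_le_two_mul hχ c
  omega

lemma Covers.card_ne_nine (hW : Covers W) : #W ≠ 9 := by
  intro hN
  obtain ⟨t, ht⟩ := exists_sum_vadd_eq_zero (W := W) (by rw [hN]; decide)
  have hvanish : ∀ χ ∈ univ.erase 0, (walsh (t +ᵥ W) χ - 1) * (walsh (t +ᵥ W) χ + 3) = 0 := by
    intro χ hχ
    have hprod := (hW.vadd t).sixteen_le_card_mul_card (ne_of_mem_erase hχ) 0
    have hadd := card_side_add_card_side (t +ᵥ W) χ 0
    obtain ⟨k, hk⟩ := even_card_side_one ht χ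
    rw [card_vadd_finset, hN, zero_add] at hadd
    rw [zero_add, hk, show #(side (t +ᵥ W) χ 0) = 9 - (k + k) by omega] at hprod
    have hk4 : k ≤ 4 := by omega
    have hk23 : k = 2 ∨ k = 3 := by interval_cases k <;> omega
    rw [walsh_eq_card_sub_two_mul, card_vadd_finset, hN, hk]
    obtain rfl | rfl := hk23 <;> norm_num
  have hsum := sum_walsh_sub_one_mul_add_three (t +ᵥ W)
  rw [sum_eq_zero hvanish, card_vadd_finset, hN] at hsum
  split_ifs at hsum <;> norm_num at hsum

lemma IsCritical.card_side_eq_of_ten_le (h : IsCritical W u) (hN : 13 ≤ #W) (hN' : #W ≤ 16)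
    (hχ : χ ≠ 0) (hA : 10 ≤ #(side W χ c)) :
    #(side W χ c) = 11 ∧ #(side W χ (c + 1)) = 2 ∨
      #(side W χ c) = 10 ∧ #(side W χ (c + 1)) = 3 := by
  have hprod := h.covers.sixteen_le_card_mul_card hχ c
  have hadd := card_side_add_card_side W χ c
  have hcover := h.card_side_le_one_add (c := c) hχ (by omega)
  have hcount := card_mul_card_add_le (W := W) (c := c) hχ (by omega)
  have hb : #(side W χ (c + 1)) ≤ 6 := by omega
  generalize #(side W χ (c + 1)) = b at *
  interval_cases b <;> omega

lemma IsCritical.card_side_ne_eleven (h : IsCritical W u) (hχ : χ ≠ 0)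
    (hA : #(side W χ c) = 11) : #(side W χ (c + 1)) ≠ 2 := by
  intro hB
  obtain ⟨b₁, b₂, hb, hBeq⟩ := card_eq_two.1 hB
  have hmem : ∀ b ∈ side W χ (c + 1), χ ⬝ᵥ b = c + 1 := fun b hb ↦ (mem_filter.1 hb).2
  have hχp : χ ⬝ᵥ (b₁ + b₂) = 0 := by
    rw [dotProduct_add, hmem b₁ (by simp [hBeq]), hmem b₂ (by simp [hBeq]), ZModModule.add_self]
  have hfilter : {a ∈ side W χ c | a + (b₁ + b₂) ∈ side W χ c} ⊆ {u} := by
    intro a ha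
    obtain ⟨haA, hap⟩ := mem_filter.1 ha
    by_contra hau
    obtain ⟨b, hbB, hb'⟩ := h.exists_forall_add_notMem hχ (by omega) haA (by simpa using hau)
    rw [hBeq] at hbB hb'
    obtain rfl | rfl : b = b₁ ∨ b = b₂ := by simpa using hbB
    · exact hb' b₂ (by simp) hb.symm (side_subset hap)
    · exact hb' b₁ (by simp) hb (add_comm b b₁ ▸ side_subset hap)
  have hle := card_le_card hfilter
  have := four_mul_card_side_le (W := W) (c := c) hχ hχp
  rw [autocorr] at this
  rw [card_singleton] at hle
  omega

lemma IsCritical.card_side_ne_ten (h : IsCritical W u) (hχ : χ ≠ 0)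
    (hA : #(side W χ c) = 10) : #(side W χ (c + 1)) ≠ 3 := by
  intro hB
  obtain ⟨b₁, b₂, b₃, h₁₂, h₁₃, h₂₃, hBeq⟩ := card_eq_three.1 hB
  have hmem : ∀ b ∈ side W χ (c + 1), χ ⬝ᵥ b = c + 1 := fun b hb ↦ (mem_filter.1 hb).2
  set F : (Fin 5 → ZMod 2) → Finset (Fin 5 → ZMod 2) :=
    fun p ↦ {a ∈ side W χ c | a + p ∈ side W χ c}
  have hF {b b'} (hb : b ∈ side W χ (c + 1)) (hb' : b' ∈ side W χ (c + 1)) : 4 ≤ #(F (b + b')) := by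
    have := four_mul_card_side_le (W := W) (c := c) (x := b + b') hχ
      (by rw [dotProduct_add, hmem b hb, hmem b' hb', ZModModule.add_self])
    change _ ≤ _ + 2 * #(F (b + b')) at this
    omega
  have hdisj {b b' b''} (hne : b ≠ b') (hne' : b ≠ b'') (hne'' : b' ≠ b'')
      (hBeq : side W χ (c + 1) = {b, b', b''}) :
      Disjoint (F (b + b')) (F (b + b'')) := disjoint_filter.2 fun a ha ha' ↦
    h.add_notMem_side hχ (by omega) hne hne' hne'' hBeq ha ha'
  have hunion : #(F (b₁ + b₂) ∪ F (b₁ + b₃) ∪ F (b₂ + b₃)) ≤ 10 :=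
    hA ▸ card_le_card (union_subset (union_subset (filter_subset _ _) (filter_subset _ _))
      (filter_subset _ _))
  have h₁ := hdisj h₁₂ h₁₃ h₂₃ hBeq
  have h₂ := hdisj h₁₂.symm h₂₃ h₁₃ (by rw [hBeq, insert_comm])
  have h₃ := hdisj h₁₃.symm h₂₃.symm h₁₂
    (by rw [hBeq, pair_comm, insert_comm, pair_comm, insert_comm])
  rw [add_comm b₂ b₁] at h₂
  rw [add_comm b₃ b₁, add_comm b₃ b₂] at h₃
  rw [card_union_of_disjoint (disjoint_union_left.2 ⟨h₂, h₃⟩), card_union_of_disjoint h₁] at hunion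
  have := hF (b := b₁) (b' := b₂) (by simp [hBeq]) (by simp [hBeq])
  have := hF (b := b₁) (b' := b₃) (by simp [hBeq]) (by simp [hBeq])
  have := hF (b := b₂) (b' := b₃) (by simp [hBeq]) (by simp [hBeq])
  omega

lemma IsCritical.card_side_le_nine (h : IsCritical W u) (hN : 13 ≤ #W) (hN' : #W ≤ 16)
    (hχ : χ ≠ 0) (c : ZMod 2) : #(side W χ c) ≤ 9 := by
  by_contra! hA
  obtain ⟨ha, hb⟩ | ⟨ha, hb⟩ := h.card_side_eq_of_ten_le hN hN' hχ hA
  · exact h.card_side_ne_eleven hχ ha hb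
  · exact h.card_side_ne_ten hχ ha hb

lemma IsCritical.card_le_thirteen_of_le_sixteen (h : IsCritical W u) (hN : #W ≤ 16) : #W ≤ 13 := by
  by_contra! hlt
  have hcover := h.card_le_one_add_two_mul
  obtain ⟨x, hx, y, hy, hxy⟩ := one_lt_card.1 (show 1 < #(uniqueSums W) by omega)
  obtain ⟨χ, hχ, hle⟩ := exists_card_sq_le_walsh_sq hx hy hxy
  have hadd := card_side_add_card_side W χ 0
  have h0 := h.card_side_le_nine (by omega) hN hχ 0
  have h1 := h.card_side_le_nine (by omega) hN hχ 1
  rw [zero_add] at hadd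
  have hwalsh : walsh W χ ^ 2 ≤ (18 - #W) ^ 2 := by
    rw [walsh_eq_card_sub_card]
    exact sq_le_sq' (by omega) (by omega)
  nlinarith

lemma IsCritical.walsh_eq_or (h : IsCritical W u) (hN : #W = 13) (hW : ∑ w ∈ W, w = 0)
    (hχ : χ ≠ 0) : walsh W χ = 5 ∨ walsh W χ = 1 ∨ walsh W χ = -3 := by
  have hadd := card_side_add_card_side W χ 0
  have h0 := h.card_side_le_nine hN.ge (by omega) hχ 0
  have h1 := h.card_side_le_nine hN.ge (by omega) hχ 1
  obtain ⟨k, hk⟩ := even_card_side_one hW χ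
  rw [zero_add] at hadd
  rw [walsh_eq_card_sub_two_mul, hN, hk]
  omega

lemma sum_autocorr_sub_four_mul_sub_six (hN : #W = 13) :
    32 * ∑ z ∈ univ.erase 0, ((autocorr W z : ℤ) - 4) * (autocorr W z - 6) =
      ∑ χ ∈ univ.erase 0, (walsh W χ ^ 2 - 1) * (walsh W χ ^ 2 - 9) - 768 := by
  have hexpand (r : ℤ) : (r - 4) * (r - 6) = r ^ 2 - 10 * r + 24 := by ring
  have hexpand' (w : ℤ) : (w ^ 2 - 1) * (w ^ 2 - 9) = w ^ 4 - 10 * w ^ 2 + 9 := by ring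
  have hfirst : ∑ z, (autocorr W z : ℤ) = 169 := by
    rw [← Nat.cast_sum, sum_autocorr, hN]
    norm_num
  simp only [sum_erase_eq_sub (mem_univ (0 : Fin 5 → ZMod 2)), hexpand, hexpand', sum_add_distrib,
    sum_sub_distrib, ← mul_sum, sum_walsh_sq, sum_walsh_pow_four, hfirst, walsh_zero, autocorr_zero,
    hN]
  simp
  ring

lemma IsCritical.sum_comp_walsh (h : IsCritical W u) (hN : #W = 13) (hW : ∑ w ∈ W, w = 0)
    {f : ℤ → ℤ} (hf : f 1 = 0) (hf' : f (-3) = 0) :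
    ∑ χ ∈ univ.erase 0, f (walsh W χ) = #{χ ∈ univ.erase 0 | walsh W χ = 5} * f 5 := by
  rw [← nsmul_eq_mul, ← sum_const, sum_filter]
  refine sum_congr rfl fun χ hχ ↦ ?_
  obtain hw | hw | hw := h.walsh_eq_or hN hW (ne_of_mem_erase hχ) <;> simp [hw, hf, hf']

lemma IsCritical.card_walsh_eq_five (h : IsCritical W u) (hN : #W = 13) (hW : ∑ w ∈ W, w = 0) :
    #{χ ∈ univ.erase 0 | walsh W χ = 5} = 4 ∨ #{χ ∈ univ.erase 0 | walsh W χ = 5} = 6 := by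
  have hquad := sum_walsh_sub_one_mul_add_three W
  rw [h.sum_comp_walsh hN hW (f := fun w ↦ (w - 1) * (w + 3)) (by norm_num) (by norm_num),
    hN] at hquad
  split_ifs at hquad <;> omega

lemma IsCritical.sum_autocorr_sub_four_mul_sub_six_le (h : IsCritical W u) (hN : #W = 13)
    (hW : ∑ w ∈ W, w = 0) :
    ∑ z ∈ univ.erase 0, ((autocorr W z : ℤ) - 4) * (autocorr W z - 6) ≤ 48 := by
  have hquart := sum_autocorr_sub_four_mul_sub_six hN
  rw [h.sum_comp_walsh hN hW (f := fun w ↦ (w ^ 2 - 1) * (w ^ 2 - 9)) (by norm_num)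
    (by norm_num)] at hquart
  have := h.card_walsh_eq_five hN hW
  omega

/-- Each of the at least six unique sums contributes `8` to the sum in
`sum_autocorr_sub_four_mul_sub_six_le`. -/
lemma IsCritical.card_uniqueSums_eq_six (h : IsCritical W u) (hN : #W = 13)
    (hW : ∑ w ∈ W, w = 0) :
    #(uniqueSums W) = 6 ∧ ∀ z ≠ 0, autocorr W z ≤ 6 := by
  have hcover := h.card_le_one_add_two_mul
  have hsum := h.sum_autocorr_sub_four_mul_sub_six_le hN hW
  have hnonneg : ∀ z ∈ univ.erase 0, 0 ≤ ((autocorr W z : ℤ) - 4) * (autocorr W z - 6) := by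
    intro z hz
    obtain ⟨m, hm⟩ := even_autocorr (W := W) (ne_of_mem_erase hz)
    obtain hm' | hm' : m ≤ 2 ∨ 3 ≤ m := by omega
    · exact mul_nonneg_of_nonpos_of_nonpos (by omega) (by omega)
    · exact mul_nonneg (by omega) (by omega)
  have hbound {Z : Finset (Fin 5 → ZMod 2)} (hZ : Z ⊆ univ.erase 0)
      (hZ' : ∀ z ∈ Z, autocorr W z = 2 ∨ 8 ≤ autocorr W z) : #Z ≤ 6 := by
    have hle := card_nsmul_le_sum Z
      (fun z ↦ ((autocorr W z : ℤ) - 4) * (autocorr W z - 6)) 8 fun z hz ↦ by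
        obtain hr | hr := hZ' z hz
        · simp [hr]
        · nlinarith
    have := sum_le_sum_of_subset_of_nonneg hZ fun z hz _ ↦ hnonneg z hz
    rw [nsmul_eq_mul] at hle
    omega
  have hX : uniqueSums W ⊆ univ.erase 0 := fun x hx ↦ by simpa using (mem_uniqueSums.1 hx).1
  have hcard := hbound hX fun x hx ↦ .inl (mem_uniqueSums.1 hx).2
  refine ⟨by omega, fun z hz ↦ ?_⟩
  by_contra! hlt
  obtain ⟨m, hm⟩ := even_autocorr (W := W) hz
  have hzX : z ∉ uniqueSums W := fun hmem ↦ by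
    have := (mem_uniqueSums.1 hmem).2
    omega
  have := hbound (Z := insert z (uniqueSums W)) (insert_subset (by simpa using hz) hX)
    (by simp only [mem_insert, forall_eq_or_imp]
        exact ⟨.inr (by omega), fun x hx ↦ .inl (mem_uniqueSums.1 hx).2⟩)
  rw [card_insert_of_notMem hzX] at this
  omega

lemma eight_le_autocorr_add (hN : #W = 13) (hχ : χ ≠ 0) (hwalsh : walsh W χ = 5)
    (hx : x ∈ uniqueSums W) (hy : y ∈ uniqueSums W) (hxy : x ≠ y)
    (hχx : χ ⬝ᵥ x = 0) (hχy : χ ⬝ᵥ y = 0) : 8 ≤ autocorr W (x + y) := by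
  obtain ⟨hx0, hx2⟩ := mem_uniqueSums.1 hx
  obtain ⟨hy0, hy2⟩ := mem_uniqueSums.1 hy
  set g : (Fin 5 → ZMod 2) → ℤ := fun η ↦ (1 + 1 * sgn (η ⬝ᵥ x)) * (1 + 1 * sgn (η ⬝ᵥ y))
  have hmoment := sum_walsh_sq_mul_one_add_sgn_mul W x y 1
  have hmass : ∑ η, g η = 2 ^ 5 := sum_one_add_sgn_mul hx0 hy0 hxy 1
  have hodd (η) : 0 ≤ (walsh W η ^ 2 - 1) * g η := by
    refine mul_nonneg ?_ (one_add_sgn_mul_nonneg (.inl rfl) _ _)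
    have : walsh W η ≠ 0 := by
      rw [walsh_eq_card_sub_two_mul, hN]
      omega
    have : 0 < walsh W η ^ 2 := by positivity
    linarith
  have hpair := sum_le_sum_of_subset_of_nonneg (subset_univ {0, χ}) fun η _ _ ↦ hodd η
  have hg0 : g 0 = 4 := by simp [g, sgn]
  have hgχ : g χ = 4 := by simp [g, sgn, hχx, hχy]
  rw [sum_pair hχ.symm, hg0, hgχ, walsh_zero, hwalsh, hN] at hpair
  simp only [sub_mul, sum_sub_distrib, one_mul, hmass] at hpair
  rw [hx2, hy2, hN] at hmoment
  change ∑ η, walsh W η ^ 2 * g η = _ at hmoment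
  rw [hmoment] at hpair
  norm_num at hpair
  omega

lemma IsCritical.card_ne_thirteen_of_sum_eq_zero (h : IsCritical W u) (hW : ∑ w ∈ W, w = 0) :
    #W ≠ 13 := by
  intro hN
  have hfive := h.card_walsh_eq_five hN hW
  obtain ⟨χ, hmem⟩ := card_pos.1 (show 0 < #{χ ∈ univ.erase 0 | walsh W χ = 5} by omega)
  obtain ⟨hχ, hwalsh⟩ := mem_filter.1 hmem
  replace hχ := ne_of_mem_erase hχ
  obtain ⟨hX, hle⟩ := h.card_uniqueSums_eq_six hN hW
  have hparallel : #{x ∈ uniqueSums W | χ ⬝ᵥ x = 0} ≤ 1 := by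
    refine card_le_one.2 fun x hx y hy ↦ ?_
    rw [mem_filter] at hx hy
    by_contra hxy
    have h8 := eight_le_autocorr_add hN hχ hwalsh hx.1 hy.1 hxy hx.2 hy.2
    have h6 := hle (x + y) (by rwa [ne_eq, add_eq_zero_iff_eq_neg, ZModModule.neg_eq_self])
    omega
  have hcover : ∀ x ∈ uniqueSums W,
      #{w ∈ side W χ 0 | w + x ∈ W} ≤ 1 + if χ ⬝ᵥ x = 0 then 1 else 0 := by
    intro x hx
    split_ifs with hχx
    · exact (card_le_card (filter_subset_filter _ side_subset)).trans (mem_uniqueSums.1 hx).2.le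
    · exact (card_filter_side_eq_one hx ((eq_or_eq_add_one _ 0).resolve_left hχx) 0).le
  have hbound := (h.card_le_one_add_sum side_subset).trans
    (Nat.add_le_add_left (sum_le_sum hcover) 1)
  rw [sum_add_distrib, ← card_eq_sum_ones, ← card_filter, hX] at hbound
  have hadd := card_side_add_card_side W χ 0
  rw [walsh_eq_card_sub_card] at hwalsh
  rw [zero_add] at hadd
  omega

lemma IsCritical.card_ne_thirteen (h : IsCritical W u) : #W ≠ 13 := by
  intro hN
  obtain ⟨t, ht⟩ := exists_sum_vadd_eq_zero (W := W) (by rw [hN]; decide)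
  exact (h.vadd t).card_ne_thirteen_of_sum_eq_zero ht (by rwa [card_vadd_finset])

lemma IsCritical.card_mem (h : IsCritical W u) : #W ∈ ({10, 11, 12, 17} : Finset ℕ) := by
  have := h.covers.nine_le_card
  have := h.covers.card_ne_nine
  have := h.card_ne_thirteen
  have := h.card_le_seventeen
  have : #W ≤ 16 → #W ≤ 13 := h.card_le_thirteen_of_le_sixteen
  simp only [mem_insert, mem_singleton]
  omega

end FiveDimensional

section MinimalSaturating

variable {n : ℕ} {S : Finset (Fin n → ZMod 2)} {χ : Fin n → ZMod 2}

lemma saturating_coe_iff :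
    Saturating (S : Set (Fin n → ZMod 2)) ↔ 0 ∉ S ∧ Covers (insert 0 S) := by
  refine and_congr ⟨fun h h0 ↦ h 0 h0 rfl, fun h s hs hs0 ↦ h (hs0 ▸ hs)⟩ ⟨fun h x ↦ ?_, ?_⟩
  · by_cases hx : x ∈ insert 0 S
    · exact ⟨0, mem_insert_self .., by rwa [zero_add]⟩
    · rw [mem_insert, not_or] at hx
      obtain ⟨a, ha, b, hb, -, rfl⟩ := h x hx.1 hx.2
      refine ⟨a, mem_insert_of_mem ha, mem_insert_of_mem ?_⟩
      rwa [← add_assoc, ZModModule.add_self, zero_add]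
  · intro h x hx0 hxS
    obtain ⟨a, ha, hax⟩ := h x
    rw [mem_insert] at ha hax
    obtain rfl | ha := ha
    · rw [zero_add] at hax
      exact absurd hax (not_or_intro hx0 hxS)
    · have hax : a + x ∈ S := hax.resolve_left fun h0 ↦ hxS <| by
        rwa [← ZModModule.neg_eq_self x, ← eq_neg_of_add_eq_zero_left h0]
      exact ⟨a, ha, a + x, hax, by simpa using hx0,
        by rw [← add_assoc, ZModModule.add_self, zero_add]⟩

lemma minSat_coe_iff :
    MinSat (S : Set (Fin n → ZMod 2)) ↔ 0 ∉ S ∧ IsCritical (insert 0 S) 0 := by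
  have herase {s} (hs0 : s ≠ 0) : insert 0 (S.erase s) = (insert 0 S).erase s :=
    (erase_insert_of_ne hs0.symm).symm
  rw [MinSat, saturating_coe_iff, and_assoc]
  refine and_congr_right fun h0 ↦ ⟨fun ⟨hcov, hmin⟩ ↦ ⟨hcov, fun s hs hs0 ↦ ?_⟩,
    fun h ↦ ⟨h.covers, fun s hs ↦ ?_⟩⟩
  · have hsS := (mem_insert.1 hs).resolve_left hs0
    rw [← not_covers_erase_iff hcov (mem_insert_self 0 S) hs hs0, ← herase hs0]
    have := hmin s hsS
    rw [← coe_erase, saturating_coe_iff] at this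
    exact fun h ↦ this ⟨fun h' ↦ h0 (mem_of_mem_erase h'), h⟩
  · have hs0 : s ≠ 0 := fun h ↦ h0 (h ▸ hs)
    have hsW : s ∈ insert 0 S := mem_insert_of_mem hs
    rw [← coe_erase, saturating_coe_iff, herase hs0]
    exact fun hsat ↦ (not_covers_erase_iff h.covers (mem_insert_self 0 S) hsW hs0).2
      (h.exists_unique_sum s hsW hs0) hsat.2

lemma minSat_side_univ_one (hχ : χ ≠ 0) : MinSat (side univ χ 1 : Set (Fin n → ZMod 2)) := by
  have hmem {v} : v ∈ side univ χ 1 ↔ χ ⬝ᵥ v = 1 := by simp [side]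
  simp only [MinSat, Saturating, mem_coe, hmem]
  refine ⟨⟨?_, fun x hx0 hx ↦ ?_⟩, fun s hs hsat ↦ ?_⟩
  · rintro s hs rfl
    simp at hs
  · obtain ⟨a, ha⟩ : (side univ χ 1).Nonempty := by
      have := two_mul_card_side_univ hχ 1
      have := Nat.two_pow_pos n
      exact card_pos.1 (by omega)
    rw [hmem] at ha
    have hx : χ ⬝ᵥ x = 0 := (eq_or_eq_add_one _ 1).resolve_left hx
    exact ⟨a, ha, a + x, by simp [dotProduct_add, ha, hx], by simpa using hx0,
      by rw [← add_assoc, ZModModule.add_self, zero_add]⟩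
  · have hs0 : s ≠ 0 := by rintro rfl; simp at hs
    obtain ⟨a, ha, b, hb, -, rfl⟩ := hsat.2 s hs0 (by simp)
    rw [dotProduct_add, hmem.1 ha.1, hmem.1 hb.1] at hs
    exact absurd hs (by decide)

end MinimalSaturating

section Examples

lemma exists_minSat_ncard_nine : ∃ S : Set (Fin 5 → ZMod 2), MinSat S ∧ S.ncard = 9 := by
  let S : Finset (Fin 5 → ZMod 2) :=
    {v | if v 0 = 0 ∧ v 1 = 0 ∧ v 2 = 0 then v 3 + v 4 = 1 else v 3 = 1 ∧ v 4 = 1}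
  exact ⟨S, minSat_coe_iff.2 (by decide +kernel), by rw [Set.ncard_coe_finset]; decide +kernel⟩

lemma exists_minSat_ncard_ten : ∃ S : Set (Fin 5 → ZMod 2), MinSat S ∧ S.ncard = 10 := by
  let S : Finset (Fin 5 → ZMod 2) := {v | hammingNorm v = 1 ∨ hammingNorm v = 4}
  exact ⟨S, minSat_coe_iff.2 (by decide +kernel), by rw [Set.ncard_coe_finset]; decide +kernel⟩

lemma exists_minSat_ncard_eleven : ∃ S : Set (Fin 5 → ZMod 2), MinSat S ∧ S.ncard = 11 := by
  let S : Finset (Fin 5 → ZMod 2) :=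
    {v | v = 1 ∨ ∃ i, v = Pi.single i 1 ∨ v = Pi.single i 1 + Pi.single (i + 1) 1}
  exact ⟨S, minSat_coe_iff.2 (by decide +kernel), by rw [Set.ncard_coe_finset]; decide +kernel⟩

lemma exists_minSat_ncard_sixteen : ∃ S : Set (Fin 5 → ZMod 2), MinSat S ∧ S.ncard = 16 := by
  have hχ : (Pi.single 0 1 : Fin 5 → ZMod 2) ≠ 0 := by simp
  refine ⟨_, minSat_side_univ_one hχ, ?_⟩
  have := two_mul_card_side_univ hχ 1
  rw [Set.ncard_coe_finset]
  omega

end Examples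

end BinarySaturating

open BinarySaturating in
/-- The possible sizes of minimal 1-saturating sets in PG(4,2) are exactly 9, 10, 11 and 16. -/
theorem minSat_PG4_sizes (k : ℕ) :
    (∃ S : Set (Fin 5 → ZMod 2), MinSat S ∧ S.ncard = k) ↔
      k = 9 ∨ k = 10 ∨ k = 11 ∨ k = 16 := by
  constructor
  · rintro ⟨S, hS, rfl⟩
    lift S to Finset (Fin 5 → ZMod 2) using S.toFinite
    obtain ⟨h0, hcrit⟩ := minSat_coe_iff.1 hS
    have hcard := hcrit.card_mem
    rw [Finset.card_insert_of_notMem h0] at hcard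
    simpa using hcard
  · rintro (rfl | rfl | rfl | rfl)
    exacts [exists_minSat_ncard_nine, exists_minSat_ncard_ten, exists_minSat_ncard_eleven,
      exists_minSat_ncard_sixteen]
end

section
/- Up to projective equivalence there is exactly one minimal 1-saturating set of size 11 in PG(4,2), and it is not a cap: the action of GL(5, ZMod 2) on the collection of minimal 1-saturating 11-sets of nonzero vectors of (ZMod 2)^5 has exactly one orbit, and no minimal 1-saturating 11-set in (ZMod 2)^5 is a cap. -/
/-!
Adjoin `0` to `S` to get a set `A` of 12 vectors with `A + A` the whole space. Minimality says that
every `s ∈ S` has a partner `t ∈ A` such that `s + t` is not a sum of two elements of `A` in any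
other way. Projecting from one such `s + t` identifies `s` with `t` and no other pair in `A`, so the
image of `A` is an 11-subset of a 16-point space. Its complement, having only five points, is one of
two configurations up to an affine change of coordinates. Hence `A` is one of finitely many lifts of
the two images, and testing these in coordinates leaves a single shape: the vertices of a pentagon
forming a basis, their sums along the sides, and the sum of all five. Any two bases are equivalent,
and two adjacent vertices are collinear with their sum, so that the set is not a cap.
-/

open Module Set
open scoped Pointwise

/-- `s + t` has no representation as a sum of two elements of `A` other than `s + t` and `t + s`:
in characteristic two, the chord of `A` through `s` and `t` is parallel to no other chord. -/
def IsUniqueSum {V : Type*} [Add V] (A : Set V) (s t : V) : Prop :=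
  ∀ a ∈ A, ∀ b ∈ A, a + b = s + t → a = s ∨ a = t

section MinSat

variable {n : ℕ} {S : Set (Fin n → ZMod 2)}

theorem saturating_iff : Saturating S ↔ 0 ∉ S ∧ insert 0 S + insert 0 S = univ := by
  constructor
  · rintro ⟨hne, hsat⟩
    refine ⟨fun h => hne 0 h rfl, eq_univ_of_forall fun x => ?_⟩
    by_cases hx : x ∈ insert 0 S
    · exact ⟨0, mem_insert 0 S, x, hx, zero_add x⟩
    · rw [mem_insert_iff, not_or] at hx
      obtain ⟨a, ha, b, hb, -, rfl⟩ := hsat x hx.1 hx.2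
      exact add_mem_add (mem_insert_of_mem 0 ha) (mem_insert_of_mem 0 hb)
  · rintro ⟨h0, hsum⟩
    refine ⟨fun s hs h => h0 (h ▸ hs), fun x hx hxS => ?_⟩
    obtain ⟨a, rfl | ha, b, rfl | hb, rfl⟩ := hsum.ge (mem_univ x)
    · simp at hx
    · simp [hb] at hxS
    · simp [ha] at hxS
    · exact ⟨a, ha, b, hb, fun hab => hx (hab ▸ ZModModule.add_self a), rfl⟩

theorem Saturating.diff_singleton_iff (hS : Saturating S) {s : Fin n → ZMod 2} (hs : s ∈ S) :
    Saturating (S \ {s}) ↔ ¬ ∃ t ∈ insert 0 S, t ≠ s ∧ IsUniqueSum (insert 0 S) s t := by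
  obtain ⟨h0, hsum⟩ := saturating_iff.1 hS
  have hs0 : s ≠ 0 := hS.1 s hs
  have hmem (a : Fin n → ZMod 2) : a ∈ insert 0 (S \ {s}) ↔ a ∈ insert 0 S ∧ a ≠ s := by
    simp only [mem_insert_iff, mem_sdiff, mem_singleton_iff]
    grind
  have hns : 0 ∉ S \ {s} := fun h => h0 h.1
  rw [saturating_iff, and_iff_right hns]
  constructor
  · rintro hsum' ⟨t, -, -, huniq⟩
    obtain ⟨a, ha, b, hb, hab : a + b = s + t⟩ := hsum'.ge (mem_univ (s + t))
    rw [hmem] at ha hb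
    rcases huniq a ha.1 b hb.1 hab with rfl | rfl
    · exact ha.2 rfl
    · exact hb.2 (add_left_cancel (hab.trans (add_comm s a)))
  · refine fun h => eq_univ_of_forall fun x => ?_
    by_contra hx
    have hcover : ∀ a ∈ insert 0 S, ∀ b ∈ insert 0 S, a + b = x → a = s ∨ b = s := by
      refine fun a ha b hb hab => or_iff_not_imp_left.2 fun has => by_contra fun hbs => hx ?_
      exact ⟨a, (hmem a).2 ⟨ha, has⟩, b, (hmem b).2 ⟨hb, hbs⟩, hab⟩
    obtain ⟨t, ht, rfl⟩ : ∃ t ∈ insert 0 S, s + t = x := by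
      obtain ⟨a, ha, b, hb, hab⟩ := hsum.ge (mem_univ x)
      rcases hcover a ha b hb hab with rfl | rfl
      exacts [⟨b, hb, hab⟩, ⟨a, ha, (add_comm b a).trans hab⟩]
    refine h ⟨t, ht, ?_, fun a ha b hb hab => (hcover a ha b hb hab).imp_right ?_⟩
    · rintro rfl
      have h0' : (0 : Fin n → ZMod 2) = t :=
        (hcover 0 (mem_insert 0 S) 0 (mem_insert 0 S) (by
          rw [add_zero, ZModModule.add_self])).elim id id
      exact hs0 h0'.symm
    · rintro rfl
      exact add_right_cancel (hab.trans (add_comm b t))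

theorem minSat_iff : MinSat S ↔
    0 ∉ S ∧ insert 0 S + insert 0 S = univ ∧
      ∀ s ∈ S, ∃ t ∈ insert 0 S, t ≠ s ∧ IsUniqueSum (insert 0 S) s t := by
  rw [MinSat, ← and_assoc, ← saturating_iff]
  refine and_congr_right fun hS => forall₂_congr fun s hs => ?_
  rw [hS.diff_singleton_iff hs, not_not]

end MinSat

section BitSum

variable {V W : Type*} [AddCommMonoid V] [AddCommMonoid W] {n : ℕ}

/-- The vector whose coordinates in the family `w` are the binary digits of `k`. Vectors are encoded
by natural numbers in this way for the kernel computation, addition becoming bitwise xor. -/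
def bitSum (w : Fin n → V) (k : ℕ) : V := ∑ i : Fin n, if k.testBit i then w i else 0

@[simp]
theorem bitSum_zero (w : Fin n → V) : bitSum w 0 = 0 := by
  simp [bitSum]

theorem bitSum_two_pow (w : Fin n → V) (i : Fin n) : bitSum w (2 ^ (i : ℕ)) = w i := by
  simp [bitSum, Nat.testBit_two_pow, Fin.val_inj]

theorem map_bitSum {F : Type*} [FunLike F V W] [AddMonoidHomClass F V W] (f : F) (w : Fin n → V)
    (k : ℕ) : f (bitSum w k) = bitSum (f ∘ w) k := by
  simp [bitSum, apply_ite f]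

theorem bitSum_vecEmpty (k : ℕ) : bitSum (![] : Fin 0 → V) k = 0 := by
  simp [bitSum]

theorem bitSum_vecCons (a : V) (w : Fin n → V) (k : ℕ) :
    bitSum (Matrix.vecCons a w) k = (if k % 2 = 1 then a else 0) + bitSum w (k / 2) := by
  simp [bitSum, Fin.sum_univ_succ, Nat.testBit_succ]

theorem bitSum_snoc (w : Fin n → V) (x : V) (k : ℕ) :
    bitSum (Fin.snoc w x : Fin (n + 1) → V) k = bitSum w k + if k.testBit n then x else 0 := by
  simp [bitSum, Fin.sum_univ_castSucc]

theorem bitSum_snoc_of_lt (w : Fin n → V) (x : V) {k : ℕ} (hk : k < 2 ^ n) :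
    bitSum (Fin.snoc w x : Fin (n + 1) → V) k = bitSum w k := by
  simp [bitSum_snoc, Nat.testBit_lt_two_pow hk]

theorem bitSum_snoc_two_pow (w : Fin n → V) (x : V) :
    bitSum (Fin.snoc w x : Fin (n + 1) → V) (2 ^ n) = x := by
  simpa using bitSum_two_pow (Fin.snoc w x : Fin (n + 1) → V) (Fin.last n)

/-- The set of vectors whose coordinates in the affine frame with origin `v` and directions `w` are
encoded by the members of `L`. -/
def codeSet (v : V) (w : Fin n → V) (L : List ℕ) : Set V :=
  (fun k => v + bitSum w k) '' {k | k ∈ L}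

theorem mem_codeSet {v : V} {w : Fin n → V} {L : List ℕ} {x : V} :
    x ∈ codeSet v w L ↔ ∃ k ∈ L, v + bitSum w k = x :=
  Iff.rfl

end BitSum

section BitSumZModTwo

variable {V : Type*} [AddCommGroup V] [Module (ZMod 2) V] {n : ℕ}

theorem bitSum_xor (w : Fin n → V) (j k : ℕ) : bitSum w (j ^^^ k) = bitSum w j + bitSum w k := by
  simp only [bitSum, ← Finset.sum_add_distrib, Nat.testBit_xor]
  refine Finset.sum_congr rfl fun i _ => ?_
  cases j.testBit i <;> cases k.testBit i <;> simp [ZModModule.add_self]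

theorem exists_bitSum_eq_sum_smul (w : Fin n → V) (c : Fin n → ZMod 2) :
    ∃ k < 2 ^ n, bitSum w k = ∑ i, c i • w i ∧ ∀ i : Fin n, k.testBit i ↔ c i ≠ 0 := by
  have hc (a : ZMod 2) : a = 0 ∨ a = 1 := by revert a; decide
  refine ⟨Nat.ofBits fun i => decide (c i ≠ 0), Nat.ofBits_lt_two_pow _,
    Finset.sum_congr rfl fun i _ => ?_, fun i => ?_⟩
  · rcases hc (c i) with h | h <;> simp [Nat.testBit_ofBits_lt, h]
  · simp [Nat.testBit_ofBits_lt]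

theorem linearIndependent_iff_bitSum {w : Fin n → V} :
    LinearIndependent (ZMod 2) w ↔ ∀ k < 2 ^ n, bitSum w k = 0 → k = 0 := by
  rw [Fintype.linearIndependent_iff]
  constructor
  · intro hw k hk hsum
    refine Nat.eq_of_testBit_eq fun i => ?_
    rcases lt_or_ge i n with hi | hi
    · have := hw (fun i => if k.testBit i then 1 else 0) (by simpa [bitSum, ite_smul] using hsum)
      simpa using this ⟨i, hi⟩
    · simpa using Nat.testBit_lt_two_pow (hk.trans_le (Nat.pow_le_pow_right two_pos hi))
  · intro hw c hsum i
    obtain ⟨k, hk, hsum', hbit⟩ := exists_bitSum_eq_sum_smul w c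
    have hk0 := hw k hk (hsum'.trans hsum)
    simpa [hk0] using hbit i

theorem bitSum_injOn {w : Fin n → V} (hw : LinearIndependent (ZMod 2) w) :
    InjOn (bitSum w) (Iio (2 ^ n)) := by
  intro j hj k hk h
  refine Nat.xor_eq_zero_iff.1 (linearIndependent_iff_bitSum.1 hw _ (Nat.xor_lt_two_pow hj hk) ?_)
  rw [bitSum_xor, h, ZModModule.add_self]

theorem exists_bitSum_eq [Module.Finite (ZMod 2) V] {w : Fin n → V}
    (hw : LinearIndependent (ZMod 2) w) (hn : finrank (ZMod 2) V = n) (v : V) :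
    ∃ k < 2 ^ n, bitSum w k = v := by
  have hv : v ∈ Submodule.span (ZMod 2) (range w) := by
    simp [hw.span_eq_top_of_card_eq_finrank' (by simpa using hn.symm)]
  obtain ⟨c, rfl⟩ := (Submodule.mem_span_range_iff_exists_fun _).1 hv
  obtain ⟨k, hk, hkc, -⟩ := exists_bitSum_eq_sum_smul w c
  exact ⟨k, hk, hkc⟩

end BitSumZModTwo

section Projection

variable {V W : Type*} [AddCommGroup V] [Module (ZMod 2) V] [AddCommGroup W] [Module (ZMod 2) W]
  {A : Set V} {s t : V} {π : V →ₗ[ZMod 2] W}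

theorem mem_span_singleton_iff_eq_zero_or_eq {x y : V} :
    y ∈ Submodule.span (ZMod 2) {x} ↔ y = 0 ∨ y = x := by
  have hc (a : ZMod 2) : a = 0 ∨ a = 1 := by revert a; decide
  rw [Submodule.mem_span_singleton]
  constructor
  · rintro ⟨c, rfl⟩
    rcases hc c with rfl | rfl <;> simp
  · rintro (rfl | rfl)
    exacts [⟨0, zero_smul _ _⟩, ⟨1, one_smul _ _⟩]

theorem map_eq_map_iff_of_ker_eq_span {x : V}
    (hπ : LinearMap.ker π = Submodule.span (ZMod 2) {x}) {a b : V} :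
    π a = π b ↔ a = b ∨ a + b = x := by
  rw [← sub_eq_zero, ← map_sub, ← LinearMap.mem_ker, hπ, mem_span_singleton_iff_eq_zero_or_eq,
    sub_eq_zero, ZModModule.sub_eq_add]

theorem IsUniqueSum.ncard_image (hst : IsUniqueSum A s t) (hs : s ∈ A) (ht : t ∈ A) (hne : s ≠ t)
    (hA : A.Finite) (hπ : LinearMap.ker π = Submodule.span (ZMod 2) {s + t}) :
    (π '' A).ncard + 1 = A.ncard := by
  have himage : π '' A = π '' (A \ {t}) := by
    refine (image_mono sdiff_subset).antisymm' ?_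
    rintro _ ⟨a, ha, rfl⟩
    rcases eq_or_ne a t with rfl | hat
    · exact ⟨s, ⟨hs, hne⟩, (map_eq_map_iff_of_ker_eq_span hπ).2 (Or.inr rfl)⟩
    · exact ⟨a, ⟨ha, hat⟩, rfl⟩
  have hinj : InjOn π (A \ {t}) := by
    rintro a ⟨ha, hat⟩ b ⟨hb, hbt⟩ hab
    rcases (map_eq_map_iff_of_ker_eq_span hπ).1 hab with h | h
    · exact h
    · have has := (hst a ha b hb h).resolve_right hat
      have hbs := (hst b hb a ha ((add_comm b a).trans h)).resolve_right hbt
      exact has.trans hbs.symm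
  rw [himage, hinj.ncard_image, ncard_sdiff_singleton_add_one ht hA]

end Projection

section CodeSet

variable {V : Type*} [AddCommGroup V] [Module (ZMod 2) V] {n : ℕ} {v : V} {w : Fin n → V}
  {L : List ℕ}

theorem add_bitSum_injOn (hw : LinearIndependent (ZMod 2) w) :
    InjOn (fun k => v + bitSum w k) (Iio (2 ^ n)) :=
  (add_right_injective v).comp_injOn (bitSum_injOn hw)

theorem add_bitSum_mem_codeSet_iff (hw : LinearIndependent (ZMod 2) w) (hL : ∀ k ∈ L, k < 2 ^ n)
    {k : ℕ} (hk : k < 2 ^ n) : v + bitSum w k ∈ codeSet v w L ↔ k ∈ L :=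
  (add_bitSum_injOn hw).mem_image_iff hL hk

theorem compl_codeSet [Module.Finite (ZMod 2) V] (hw : LinearIndependent (ZMod 2) w)
    (hn : finrank (ZMod 2) V = n) (hL : ∀ k ∈ L, k < 2 ^ n) :
    (codeSet v w L)ᶜ = codeSet v w ((List.range (2 ^ n)).filter (· ∉ L)) := by
  ext x
  obtain ⟨k, hk, hkx⟩ := exists_bitSum_eq hw hn (x - v)
  obtain rfl : v + bitSum w k = x := by rw [hkx, add_sub_cancel]
  rw [mem_compl_iff, add_bitSum_mem_codeSet_iff hw hL hk,
    add_bitSum_mem_codeSet_iff hw (fun j hj => by simp_all) hk]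
  simp [hk]

theorem codeSet_bitSum (w : Fin n → V) (z : ℕ) (L : List ℕ) :
    codeSet (bitSum w z) w L = codeSet 0 w (L.map (· ^^^ z)) := by
  ext x
  simp [mem_codeSet, bitSum_xor, add_comm]

theorem add_bitSum_add_add_bitSum (v : V) (w : Fin n → V) (j k : ℕ) :
    v + bitSum w j + (v + bitSum w k) = bitSum w (j ^^^ k) := by
  rw [add_add_add_comm, ZModModule.add_self, zero_add, bitSum_xor]

theorem ncard_codeSet (hw : LinearIndependent (ZMod 2) w) (hL : ∀ k ∈ L, k < 2 ^ n)
    (hnodup : L.Nodup) : (codeSet v w L).ncard = L.length := by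
  have hinj : InjOn (fun k => v + bitSum w k) {k | k ∈ L} := (add_bitSum_injOn hw).mono hL
  rw [codeSet, hinj.ncard_image, ← List.coe_toFinset, ncard_coe_finset,
    List.toFinset_card_of_nodup hnodup]

end CodeSet

section Lift

variable {V W : Type*} [AddCommGroup V] [Module (ZMod 2) V] [AddCommGroup W] [Module (ZMod 2) W]
  {n : ℕ} {K : List ℕ}

/-- The lists obtained from `K` by adding the bit `n` to some of its members, other than the codes
`0` and `2 ^ i` of the points of the affine frame. -/
def codeLifts (n : ℕ) (K : List ℕ) : List (List ℕ) :=
  (K.map fun k => if k ∈ 0 :: (List.range n).map (2 ^ ·) then [k] else [k, k ^^^ 2 ^ n]).sections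

theorem map_mem_codeLifts {c : ℕ → ℕ} (hc : ∀ k ∈ K, c k = k ∨ c k = k ^^^ 2 ^ n)
    (hc0 : c 0 = 0) (hc2 : ∀ i < n, c (2 ^ i) = 2 ^ i) : K.map c ∈ codeLifts n K := by
  rw [codeLifts, List.mem_sections, List.forall₂_map_left_iff, List.forall₂_map_right_iff,
    List.forall₂_same]
  intro k hk
  split_ifs with hbase
  · simp only [List.mem_cons, List.mem_map, List.mem_range] at hbase
    obtain rfl | ⟨i, hi, rfl⟩ := hbase
    · simp [hc0]
    · simp [hc2 i hi]
  · simpa using hc k hk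

theorem linearIndependent_snoc_of_map {π : V →ₗ[ZMod 2] W} {w : Fin n → V} {x : V}
    (hw : LinearIndependent (ZMod 2) (π ∘ w)) (hx : π x = 0) (hx0 : x ≠ 0) :
    LinearIndependent (ZMod 2) (Fin.snoc w x : Fin (n + 1) → V) := by
  refine linearIndependent_finSnoc.2 ⟨hw.of_comp π, fun hxw => hx0 ?_⟩
  obtain ⟨c, rfl⟩ := (Submodule.mem_span_range_iff_exists_fun _).1 hxw
  have hc := Fintype.linearIndependent_iff.1 hw c (by simpa using hx)
  simp [hc]

theorem add_bitSum_snoc_eq_or {π : V →ₗ[ZMod 2] W} {x : V}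
    (hπ : LinearMap.ker π = Submodule.span (ZMod 2) {x}) {v y : V} {w : Fin n → V} {k : ℕ}
    (hk : k < 2 ^ n) (hy : π (v + bitSum w k) = π y) :
    v + bitSum (Fin.snoc w x : Fin (n + 1) → V) k = y ∨
      v + bitSum (Fin.snoc w x : Fin (n + 1) → V) (k ^^^ 2 ^ n) = y := by
  rw [bitSum_xor, bitSum_snoc_two_pow, bitSum_snoc_of_lt w x hk]
  refine ((map_eq_map_iff_of_ker_eq_span hπ).1 hy).imp_right fun h => ?_
  rw [← h, ← add_assoc, ← add_assoc, ZModModule.add_self, zero_add]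

theorem exists_codeLift {A : Set V} {x : V} (hx : x ≠ 0) {π : V →ₗ[ZMod 2] W}
    (hπ : LinearMap.ker π = Submodule.span (ZMod 2) {x}) {f : W} {e : Fin n → W}
    (he : LinearIndependent (ZMod 2) e) (hA : π '' A = codeSet f e K)
    (hK : ∀ k ∈ K, k < 2 ^ n) (h0 : 0 ∈ K) (h2 : ∀ i < n, 2 ^ i ∈ K) :
    ∃ (v : V) (w : Fin (n + 1) → V), LinearIndependent (ZMod 2) w ∧ bitSum w (2 ^ n) = x ∧
      ∃ l ∈ codeLifts n K, codeSet v w l ⊆ A ∧ π '' A ⊆ π '' codeSet v w l := by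
  have hpt (k : ℕ) : ∃ a, k ∈ K → a ∈ A ∧ π a = f + bitSum e k := by
    by_cases hk : k ∈ K
    · obtain ⟨a, ha, hak⟩ := hA.ge (mem_codeSet.2 ⟨k, hk, rfl⟩)
      exact ⟨a, fun _ => ⟨ha, hak⟩⟩
    · exact ⟨0, fun h => absurd h hk⟩
  choose a ha using hpt
  let w₀ : Fin n → V := fun i => a 0 + a (2 ^ (i : ℕ))
  let w : Fin (n + 1) → V := Fin.snoc w₀ x
  have hπw₀ : π ∘ w₀ = e := by
    funext i
    simp [w₀, ha 0 h0, ha _ (h2 i i.2), bitSum_two_pow, ← add_assoc, ZModModule.add_self]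
  have hw : LinearIndependent (ZMod 2) w := by
    refine linearIndependent_snoc_of_map (hπw₀ ▸ he) ?_ hx
    rw [← LinearMap.mem_ker, hπ]
    exact Submodule.mem_span_singleton_self x
  classical
  let c (k : ℕ) : ℕ := if a 0 + bitSum w k = a k then k else k ^^^ 2 ^ n
  have hc (k : ℕ) (hk : k ∈ K) : a 0 + bitSum w (c k) = a k := by
    have hfiber : π (a 0 + bitSum w₀ k) = π (a k) := by
      rw [map_add, map_bitSum, hπw₀, (ha 0 h0).2, (ha k hk).2, bitSum_zero, add_zero]
    have hlift := add_bitSum_snoc_eq_or hπ (hK k hk) hfiber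
    grind
  refine ⟨a 0, w, hw, bitSum_snoc_two_pow w₀ x, K.map c, map_mem_codeLifts ?_ ?_ ?_, ?_, ?_⟩
  · exact fun k _ => ite_eq_or_eq _ _ _
  · simp [c]
  · intro i hi
    have hwi : bitSum w (2 ^ i) = a 0 + a (2 ^ i) := by
      rw [bitSum_snoc_of_lt w₀ x (hK _ (h2 i hi)), bitSum_two_pow w₀ ⟨i, hi⟩]
    simp [c, hwi, ← add_assoc, ZModModule.add_self]
  · intro y hy
    obtain ⟨_, hck, rfl⟩ := mem_codeSet.1 hy
    obtain ⟨k, hk, rfl⟩ := List.mem_map.1 hck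
    exact (hc k hk).symm ▸ (ha k hk).1
  · rw [hA]
    rintro _ ⟨k, hk, rfl⟩
    exact ⟨a k, ⟨c k, List.mem_map_of_mem hk, hc k hk⟩, (ha k hk).2⟩

theorem IsUniqueSum.exists_eq_codeSet {A : Set V} {s t : V} (hst : IsUniqueSum A s t) (hs : s ∈ A)
    (ht : t ∈ A) (hne : s ≠ t) {π : V →ₗ[ZMod 2] W}
    (hπ : LinearMap.ker π = Submodule.span (ZMod 2) {s + t}) {f : W} {e : Fin n → W}
    (he : LinearIndependent (ZMod 2) e) (hA : π '' A = codeSet f e K)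
    (hK : ∀ k ∈ K, k < 2 ^ n) (h0 : 0 ∈ K) (h2 : ∀ i < n, 2 ^ i ∈ K) :
    ∃ (v : V) (w : Fin (n + 1) → V), LinearIndependent (ZMod 2) w ∧
      ∃ l ∈ codeLifts n K, ∃ c ∈ l, A = codeSet v w ((c ^^^ 2 ^ n) :: l) := by
  have hfiber {a b : V} : π a = π b ↔ a = b ∨ a + b = s + t := map_eq_map_iff_of_ker_eq_span hπ
  have hx : s + t ≠ 0 := fun h => hne (by rwa [← ZModModule.sub_eq_add, sub_eq_zero] at h)
  obtain ⟨v, w, hw, hwx, l, hl, hlA, hAl⟩ := exists_codeLift hx hπ he hA hK h0 h2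
  obtain ⟨_, ⟨c, hc, rfl⟩, hcs⟩ := hAl (mem_image_of_mem π hs)
  have htwin : v + bitSum w (c ^^^ 2 ^ n) = v + bitSum w c + (s + t) := by
    rw [bitSum_xor, hwx, add_assoc]
  have hpair : v + bitSum w c = s ∧ v + bitSum w (c ^^^ 2 ^ n) = t ∨
      v + bitSum w c = t ∧ v + bitSum w (c ^^^ 2 ^ n) = s := by
    rw [htwin]
    rcases hfiber.1 hcs with h | h
    · simp [h, ← add_assoc, ZModModule.add_self]
    · have h' : v + bitSum w c = t := by rw [add_comm] at h; exact add_left_cancel h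
      simp [h', add_left_comm t s t, ZModModule.add_self]
  refine ⟨v, w, hw, l, hl, c, hc, Subset.antisymm (fun a ha => ?_) ?_⟩
  · obtain ⟨_, ⟨d, hd, rfl⟩, hda⟩ := hAl (mem_image_of_mem π ha)
    rcases hfiber.1 hda with h | h
    · exact ⟨d, List.mem_cons_of_mem _ hd, h⟩
    · have hast := hst a ha _ (hlA ⟨d, hd, rfl⟩) ((add_comm _ _).trans h)
      simp only [mem_codeSet, List.mem_cons]
      grind
  · rintro _ ⟨d, hd, rfl⟩
    rcases List.mem_cons.1 hd with rfl | hd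
    · grind
    · exact hlA ⟨d, hd, rfl⟩

theorem lt_of_mem_codeLifts (hK : ∀ k ∈ K, k < 2 ^ n) {l : List ℕ} (hl : l ∈ codeLifts n K)
    {c : ℕ} (hc : c ∈ l) : c < 2 ^ (n + 1) := by
  obtain ⟨i, hi, rfl⟩ := List.getElem_of_mem hc
  obtain ⟨hlen, hget⟩ := List.forall₂_iff_get.1 (List.mem_sections.1 hl)
  have hi' : i < K.length := by simpa [hlen] using hi
  have hKi := (hK K[i] (List.getElem_mem hi')).trans (Nat.pow_lt_pow_succ one_lt_two)
  have hmem := hget i hi (hlen ▸ hi)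
  simp only [List.get_eq_getElem, List.getElem_map] at hmem
  split_ifs at hmem
  · exact List.mem_singleton.1 hmem ▸ hKi
  · rcases List.mem_pair.1 hmem with h | h
    · exact h ▸ hKi
    · exact h ▸ Nat.xor_lt_two_pow hKi (Nat.pow_lt_pow_succ one_lt_two)

end Lift

section Frame

/-- The two configurations of five points in a four-dimensional space over `ZMod 2`, as code lists:
five points in general position, and five points four of which form an affine plane. The affine
frames are chosen in the complement, so that the codes `0` and `2 ^ i` do not occur. -/
def fivePointCodes : List (List ℕ) := [[7, 11, 13, 14, 15], [11, 12, 13, 14, 15]]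

variable {W : Type*} [AddCommGroup W] [Module (ZMod 2) W] {D : Set W}

theorem exists_frame_of_forall_add_notMem (hD : D.ncard = 5)
    (hplane : ∀ p ∈ D, ∀ q ∈ D, ∀ r ∈ D, p ≠ q → p ≠ r → q ≠ r → p + q + r ∉ D) :
    ∃ (f : W) (e : Fin 4 → W), LinearIndependent (ZMod 2) e ∧
      D = codeSet f e [7, 11, 13, 14, 15] := by
  obtain ⟨p, _, hp, rfl, hD'⟩ := (ncard_eq_succ (finite_of_ncard_pos (by omega))).1 hD
  obtain ⟨q, _, hq, rfl, hD''⟩ := (ncard_eq_succ (finite_of_ncard_pos (by omega))).1 hD'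
  obtain ⟨r, s, t, hrs, hrt, hst, rfl⟩ := ncard_eq_three.1 hD''
  simp only [mem_insert_iff, mem_singleton_iff, not_or] at hp hq
  obtain ⟨hpq, hpr, hps, hpt⟩ := hp
  obtain ⟨hqr, hqs, hqt⟩ := hq
  have hpqrs : p + q + r ≠ s := fun h =>
    hplane p (by simp) q (by simp) r (by simp) hpq hpr hqr (by simp [h])
  have hpqrt : p + q + r ≠ t := fun h =>
    hplane p (by simp) q (by simp) r (by simp) hpq hpr hqr (by simp [h])
  have hpqst : p + q + s ≠ t := fun h =>
    hplane p (by simp) q (by simp) s (by simp) hpq hps hqs (by simp [h])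
  have hprst : p + r + s ≠ t := fun h =>
    hplane p (by simp) r (by simp) s (by simp) hpr hps hrs (by simp [h])
  have hqrst : q + r + s ≠ t := fun h =>
    hplane q (by simp) r (by simp) s (by simp) hqr hqs hrs (by simp [h])
  clear hplane hD hD' hD''
  have hpp := ZModModule.add_self p
  have hqq := ZModModule.add_self q
  have hrr := ZModModule.add_self r
  have hss := ZModModule.add_self s
  have htt := ZModModule.add_self t
  refine ⟨p + q + r + s + t, ![p + q, p + r, p + s, p + t],
    linearIndependent_iff_bitSum.2 fun k hk => ?_, ?_⟩
  · simp only [bitSum_vecCons, bitSum_vecEmpty]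
    split_ifs <;> grind
  · ext x
    simp only [mem_codeSet, bitSum_vecCons, bitSum_vecEmpty, List.mem_cons, List.not_mem_nil,
      or_false, exists_eq_or_imp, exists_eq_left]
    grind

theorem exists_frame_of_add_mem (hW : finrank (ZMod 2) W = 4) (hD : D.ncard = 5) {p q r : W}
    (hp : p ∈ D) (hq : q ∈ D) (hr : r ∈ D) (hpq : p ≠ q) (hpr : p ≠ r) (hqr : q ≠ r)
    (hpqr : p + q + r ∈ D) :
    ∃ (f : W) (e : Fin 4 → W), LinearIndependent (ZMod 2) e ∧
      D = codeSet f e [11, 12, 13, 14, 15] := by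
  have hpp := ZModModule.add_self p
  have hqq := ZModModule.add_self q
  have hrr := ZModModule.add_self r
  have hsub : {p, q, r, p + q + r} ⊆ D := by grind
  have hcard : ({p, q, r, p + q + r} : Set W).ncard = 4 := by
    refine ncard_eq_four.2 ⟨p, q, r, p + q + r, ?_⟩
    grind
  obtain ⟨u, hu⟩ : ∃ u, D \ {p, q, r, p + q + r} = {u} := by
    rw [← ncard_eq_one, ncard_sdiff hsub, hD, hcard]
  have huu := ZModModule.add_self u
  have hudiff : u ∈ D \ {p, q, r, p + q + r} := hu ▸ rfl
  have hDu : D = {p, q, r, p + q + r, u} := by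
    rw [← sdiff_union_of_subset hsub, hu]
    grind
  have hli : LinearIndependent (ZMod 2) ![p + q, p + r, p + q + r + u] := by
    refine linearIndependent_iff_bitSum.2 fun k hk => ?_
    simp only [bitSum_vecCons, bitSum_vecEmpty]
    split_ifs <;> grind
  obtain ⟨y, hy⟩ := exists_linearIndependent_snoc_of_lt_finrank hli (by rw [hW]; norm_num)
  have hyy := ZModModule.add_self y
  simp only [Matrix.Fin.snoc_vecCons, Matrix.Fin.snoc_vecEmpty] at hy
  refine ⟨q + r + u + y, _, hy, ?_⟩
  rw [hDu]
  ext x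
  simp only [mem_codeSet, bitSum_vecCons, bitSum_vecEmpty, List.mem_cons, List.not_mem_nil,
    or_false, exists_eq_or_imp, exists_eq_left]
  grind

theorem exists_frame (hW : finrank (ZMod 2) W = 4) (hD : D.ncard = 5) :
    ∃ K ∈ fivePointCodes, ∃ (f : W) (e : Fin 4 → W),
      LinearIndependent (ZMod 2) e ∧ D = codeSet f e K := by
  by_cases hplane : ∀ p ∈ D, ∀ q ∈ D, ∀ r ∈ D, p ≠ q → p ≠ r → q ≠ r → p + q + r ∉ D
  · exact ⟨_, .head _, exists_frame_of_forall_add_notMem hD hplane⟩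
  · push Not at hplane
    obtain ⟨p, hp, q, hq, r, hr, hpq, hpr, hqr, hpqr⟩ := hplane
    exact ⟨_, .tail _ (.head _), exists_frame_of_add_mem hW hD hp hq hr hpq hpr hqr hpqr⟩

end Frame

section CodeCheck

/-- The bit mask of a list of codes. -/
def codeMask (L : List ℕ) : ℕ := L.foldr (fun a m => m ||| 1 <<< a) 0

/-- Membership test for a list of codes, built from operations on numerals that the kernel performs
without unfolding their definitions. -/
def codeMem (L : List ℕ) (k : ℕ) : Bool := ((codeMask L >>> k) % 2).beq 1

theorem testBit_codeMask {L : List ℕ} {k : ℕ} : (codeMask L).testBit k = true ↔ k ∈ L := by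
  induction L with
  | nil => simp [codeMask]
  | cons a L ih =>
    simp only [codeMask, List.foldr_cons, Nat.testBit_or, Bool.or_eq_true, List.mem_cons] at ih ⊢
    rw [ih, Nat.one_shiftLeft, Nat.testBit_two_pow]
    simp [or_comm, eq_comm]

theorem codeMem_iff {L : List ℕ} {k : ℕ} : codeMem L k = true ↔ k ∈ L := by
  rw [← testBit_codeMask, codeMem, Nat.beq_eq, Nat.testBit_eq_decide_div_mod_eq,
    Nat.shiftRight_eq_div_pow, decide_eq_true_iff]

/-- Boolean form, for lists `L` of codes, of the condition `A + A = univ` on `codeSet v w L`. -/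
def codeCovers (n : ℕ) (L : List ℕ) : Bool :=
  (List.range (2 ^ n)).all fun x => L.any fun a => codeMem L (a ^^^ x)

/-- Boolean form of `IsUniqueSum` on codes. -/
def codeIsUniqueSum (L : List ℕ) (s t : ℕ) : Bool :=
  L.all fun a => !codeMem L (a ^^^ (s ^^^ t)) || a.beq s || a.beq t

/-- Boolean test that the code `s` has a partner `t` in `L` with `codeIsUniqueSum L s t`. -/
def codeHasUniqueSum (L : List ℕ) (s : ℕ) : Bool :=
  L.any fun t => !t.beq s && codeIsUniqueSum L s t

variable {V : Type*} [AddCommGroup V] [Module (ZMod 2) V] {n : ℕ} {v : V} {w : Fin n → V}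
  {L : List ℕ}

theorem codeCovers_iff [Module.Finite (ZMod 2) V] (hw : LinearIndependent (ZMod 2) w)
    (hn : finrank (ZMod 2) V = n) (hL : ∀ k ∈ L, k < 2 ^ n) :
    codeCovers n L = true ↔ codeSet v w L + codeSet v w L = univ := by
  simp only [codeCovers, List.all_eq_true, List.mem_range, List.any_eq_true, codeMem_iff]
  constructor
  · refine fun h => eq_univ_of_forall fun x => ?_
    obtain ⟨k, hk, rfl⟩ := exists_bitSum_eq hw hn x
    obtain ⟨a, ha, hak⟩ := h k hk
    refine ⟨_, ⟨a, ha, rfl⟩, _, ⟨_, hak, rfl⟩, ?_⟩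
    simp [add_bitSum_add_add_bitSum]
  · intro h k hk
    obtain ⟨_, ⟨a, ha, rfl⟩, _, ⟨b, hb, rfl⟩, hab⟩ := h.ge (mem_univ (bitSum w k))
    refine ⟨a, ha, ?_⟩
    have hk' : a ^^^ b = k :=
      bitSum_injOn hw (Nat.xor_lt_two_pow (hL a ha) (hL b hb)) hk
        ((add_bitSum_add_add_bitSum v w a b).symm.trans hab)
    simpa [← hk'] using hb

theorem codeIsUniqueSum_iff (hw : LinearIndependent (ZMod 2) w) (hL : ∀ k ∈ L, k < 2 ^ n) {s t : ℕ}
    (hs : s ∈ L) (ht : t ∈ L) : codeIsUniqueSum L s t = true ↔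
      IsUniqueSum (codeSet v w L) (v + bitSum w s) (v + bitSum w t) := by
  have hinj {j k : ℕ} (hj : j ∈ L) (hk : k ∈ L) : v + bitSum w j = v + bitSum w k ↔ j = k :=
    (add_bitSum_injOn hw).eq_iff (hL j hj) (hL k hk)
  have hxor {a b : ℕ} (ha : a ∈ L) (hb : b ∈ L) :
      v + bitSum w a + (v + bitSum w b) = v + bitSum w s + (v + bitSum w t) ↔
        a ^^^ (s ^^^ t) = b := by
    rw [add_bitSum_add_add_bitSum, add_bitSum_add_add_bitSum,
      (bitSum_injOn hw).eq_iff (Nat.xor_lt_two_pow (hL a ha) (hL b hb))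
        (Nat.xor_lt_two_pow (hL s hs) (hL t ht))]
    constructor
    · intro h
      simp [← h]
    · rintro rfl
      simp
  simp only [codeIsUniqueSum, List.all_eq_true, Bool.or_eq_true, Bool.not_eq_true',
    ← Bool.not_eq_true, codeMem_iff, Nat.beq_eq, IsUniqueSum, codeSet, forall_mem_image,
    mem_ofPred_eq]
  refine forall₂_congr fun a ha => ?_
  rw [hinj ha hs, hinj ha ht, or_assoc]
  constructor
  · exact fun h b hb hab => h.resolve_left (not_not.2 ((hxor ha hb).1 hab ▸ hb))
  · refine fun h => or_iff_not_imp_left.2 fun hmem => ?_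
    exact h (not_not.1 hmem) ((hxor ha (not_not.1 hmem)).2 rfl)

theorem codeHasUniqueSum_iff (hw : LinearIndependent (ZMod 2) w) (hL : ∀ k ∈ L, k < 2 ^ n) {s : ℕ}
    (hs : s ∈ L) : codeHasUniqueSum L s = true ↔ ∃ t ∈ codeSet v w L, t ≠ v + bitSum w s ∧
      IsUniqueSum (codeSet v w L) (v + bitSum w s) t := by
  simp only [codeHasUniqueSum, List.any_eq_true, Bool.and_eq_true, Bool.not_eq_true', codeSet,
    exists_mem_image, mem_ofPred_eq, ← Bool.not_eq_true, Nat.beq_eq]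
  refine exists_congr fun t => and_congr_right fun ht =>
    and_congr ?_ (codeIsUniqueSum_iff hw hL hs ht)
  exact ((add_bitSum_injOn hw).eq_iff (hL t ht) (hL s hs)).not.symm

end CodeCheck

section Pentagon

variable {V W : Type*} [AddCommGroup V] [AddCommGroup W]

/-- The five vertices `b i` of a pentagon, the third points `b i + b (i + 1)` on the lines spanned
by its sides, and the sum of all vertices. -/
def pentagonSet (b : Fin 5 → V) : Set V :=
  range b ∪ range (fun i => b i + b (i + 1)) ∪ {∑ i, b i}

/-- The codes of the points of `pentagonSet b` in the frame `b`. -/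
def pentagonCodes : List ℕ := [31, 1, 2, 4, 8, 16, 3, 6, 12, 24, 17]

theorem image_pentagonSet {F : Type*} [FunLike F V W] [AddMonoidHomClass F V W] (f : F)
    (b : Fin 5 → V) : f '' pentagonSet b = pentagonSet (f ∘ b) := by
  simp only [pentagonSet, image_union, image_singleton, ← range_comp, Function.comp_def, map_add,
    map_sum]

theorem pentagonSet_eq_codeSet (b : Fin 5 → V) : pentagonSet b = codeSet 0 b pentagonCodes := by
  ext x
  simp [pentagonSet, pentagonCodes, mem_codeSet, bitSum, Fin.exists_fin_succ, Fin.sum_univ_five,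
    Nat.testBit_eq_decide_div_mod_eq, eq_comm, add_comm (b 4) (b 0), or_assoc]

theorem insert_zero_pentagonSet (b : Fin 5 → V) :
    insert 0 (pentagonSet b) = codeSet 0 b (0 :: pentagonCodes) := by
  simp [pentagonSet_eq_codeSet, codeSet, ofPred_or, image_insert_eq]

theorem lt_of_mem_zero_cons_pentagonCodes : ∀ k ∈ 0 :: pentagonCodes, k < 2 ^ 5 := by
  decide

variable [Module (ZMod 2) V] {b : Fin 5 → V}

theorem zero_notMem_pentagonSet (hb : LinearIndependent (ZMod 2) b) : 0 ∉ pentagonSet b := by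
  have h0 : 0 ∉ pentagonCodes := by decide
  have hlt : ∀ k ∈ pentagonCodes, k < 2 ^ 5 := by decide
  simpa [pentagonSet_eq_codeSet] using
    (add_bitSum_mem_codeSet_iff (v := 0) hb hlt (Nat.two_pow_pos 5)).not.2 h0

theorem ncard_pentagonSet (hb : LinearIndependent (ZMod 2) b) : (pentagonSet b).ncard = 11 := by
  rw [pentagonSet_eq_codeSet, ncard_codeSet hb (by decide) (by decide)]
  rfl

theorem linearIndependent_of_pentagonSet [Module.Finite (ZMod 2) V] (hV : finrank (ZMod 2) V = 5)
    (hb : insert 0 (pentagonSet b) + insert 0 (pentagonSet b) = univ) :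
    LinearIndependent (ZMod 2) b := by
  refine linearIndependent_of_top_le_span_of_card_eq_finrank (fun x _ => ?_) (by simp [hV])
  have hspan : insert 0 (pentagonSet b) ⊆ Submodule.span (ZMod 2) (range b) := by
    have hmem (i : Fin 5) : b i ∈ Submodule.span (ZMod 2) (range b) :=
      Submodule.subset_span (mem_range_self i)
    rintro _ (rfl | (⟨i, rfl⟩ | ⟨i, rfl⟩) | rfl)
    exacts [zero_mem _, hmem i, add_mem (hmem i) (hmem (i + 1)), sum_mem fun i _ => hmem i]
  obtain ⟨y, hy, z, hz, rfl⟩ := hb.ge (mem_univ x)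
  exact add_mem (hspan hy) (hspan hz)

end Pentagon

section PentagonCheck

/-- Boolean test that, in coordinates, `L` lists `0` and the points of some `pentagonSet b`. -/
def codeIsPentagon (L : List ℕ) : Bool :=
  let adj a b := codeMem L (a ^^^ b)
  -- The vertices of a pentagon are the only points whose translate of `L` meets `L` in six points.
  let P := L.filter fun a => (L.filter (adj a)).length.beq 6
  P.any fun b₀ => P.any fun b₁ => adj b₀ b₁ && P.any fun b₂ => adj b₁ b₂ &&
    P.any fun b₃ => adj b₂ b₃ && P.any fun b₄ => adj b₃ b₄ && adj b₄ b₀ &&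
      (codeMask L).beq (codeMask [0, b₀ ^^^ b₁ ^^^ b₂ ^^^ b₃ ^^^ b₄, b₀, b₁, b₂, b₃, b₄,
        b₀ ^^^ b₁, b₁ ^^^ b₂, b₂ ^^^ b₃, b₃ ^^^ b₄, b₄ ^^^ b₀])

theorem exists_pentagonSet_of_codeIsPentagon {V : Type*} [AddCommGroup V] [Module (ZMod 2) V]
    {n : ℕ} {L : List ℕ} (hL : codeIsPentagon L = true) (w : Fin n → V) :
    ∃ b, codeSet 0 w L = insert 0 (pentagonSet b) := by
  simp only [codeIsPentagon, List.any_eq_true, Bool.and_eq_true, Nat.beq_eq] at hL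
  obtain ⟨b₀, -, b₁, -, -, b₂, -, -, b₃, -, -, b₄, -, -, hmask⟩ := hL
  refine ⟨![bitSum w b₀, bitSum w b₁, bitSum w b₂, bitSum w b₃, bitSum w b₄], ?_⟩
  ext x
  rw [insert_zero_pentagonSet, mem_codeSet]
  simp only [← testBit_codeMask (L := L), hmask, testBit_codeMask]
  simp [pentagonCodes, mem_codeSet, bitSum_xor, bitSum_vecCons, bitSum_vecEmpty, add_assoc,
    add_comm (bitSum w b₄) (bitSum w b₀)]

/-- Boolean test that if `L` satisfies, in coordinates, the criterion of `minSat_iff` with the code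
`z` as origin, then it lists `0` and the points of a `pentagonSet`. -/
def codeCheck (L : List ℕ) : Bool :=
  !codeCovers 5 L || L.all fun z =>
    !(L.all fun s => s.beq z || codeHasUniqueSum L s) || codeIsPentagon (L.map (· ^^^ z))

theorem codeCheck_of_mem_codeLifts {K : List ℕ} (hK : K ∈ fivePointCodes) {l : List ℕ}
    (hl : l ∈ codeLifts 4 ((List.range (2 ^ 4)).filter (· ∉ K))) {c : ℕ} (hc : c ∈ l) :
    codeCheck ((c ^^^ 2 ^ 4) :: l) = true := by
  have hall : fivePointCodes.all fun K =>
      (codeLifts 4 ((List.range (2 ^ 4)).filter (· ∉ K))).all fun l =>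
        l.all fun c => codeCheck ((c ^^^ 2 ^ 4) :: l) := by
    decide +kernel
  simp only [List.all_eq_true] at hall
  exact hall K hK l hl c hc

end PentagonCheck

section PG42

variable {S : Set (Fin 5 → ZMod 2)} {b : Fin 5 → Fin 5 → ZMod 2}

theorem minSat_pentagonSet (hb : LinearIndependent (ZMod 2) b) : MinSat (pentagonSet b) := by
  have hcovers : codeCovers 5 (0 :: pentagonCodes) = true := by decide +kernel
  have hunique : ∀ k ∈ 0 :: pentagonCodes, codeHasUniqueSum (0 :: pentagonCodes) k = true := by
    decide +kernel
  rw [minSat_iff, insert_zero_pentagonSet]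
  refine ⟨zero_notMem_pentagonSet hb,
    (codeCovers_iff hb (by simp) lt_of_mem_zero_cons_pentagonCodes).1 hcovers, fun s hs => ?_⟩
  obtain ⟨k, hk, rfl⟩ := (insert_zero_pentagonSet b).le (mem_insert_of_mem 0 hs)
  exact (codeHasUniqueSum_iff hb lt_of_mem_zero_cons_pentagonCodes hk).1 (hunique k hk)

theorem not_isCap_pentagonSet (hb : LinearIndependent (ZMod 2) b) : ¬ IsCap (pentagonSet b) := by
  intro hcap
  refine hcap.2 (b 0) (Or.inl (Or.inl ⟨0, rfl⟩)) (b 1) (Or.inl (Or.inl ⟨1, rfl⟩)) (b 0 + b 1)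
    (Or.inl (Or.inr ⟨0, rfl⟩)) (hb.injective.ne (by decide)) ?_ ?_ (ZModModule.add_self _)
  · simpa using hb.ne_zero 1
  · simpa using hb.ne_zero 0

theorem projEquiv_image {n : ℕ} (f : (Fin n → ZMod 2) ≃ₗ[ZMod 2] (Fin n → ZMod 2))
    (S : Set (Fin n → ZMod 2)) : ProjEquiv S (f '' S) := by
  refine ⟨Matrix.GeneralLinearGroup.toLin.symm (LinearMap.GeneralLinearGroup.ofLinearEquiv f), ?_⟩
  refine image_congr fun x _ => ?_
  rw [← Matrix.mulVecLin_apply, ← Matrix.GeneralLinearGroup.coe_toLin, MulEquiv.apply_symm_apply]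
  rfl

theorem projEquiv_pentagonSet {b c : Fin 5 → Fin 5 → ZMod 2} (hb : LinearIndependent (ZMod 2) b)
    (hc : LinearIndependent (ZMod 2) c) : ProjEquiv (pentagonSet b) (pentagonSet c) := by
  let B := basisOfLinearIndependentOfCardEqFinrank hb (by simp)
  let C := basisOfLinearIndependentOfCardEqFinrank hc (by simp)
  have hBC : (B.equiv C (Equiv.refl _)) ∘ b = c := by
    funext i
    simpa [B, C] using B.equiv_apply i C (Equiv.refl _)
  rw [← hBC, ← image_pentagonSet]
  exact projEquiv_image _ _

theorem MinSat.exists_pentagonSet_of_codeCheck (hS : MinSat S) {v : Fin 5 → ZMod 2}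
    {w : Fin 5 → Fin 5 → ZMod 2} (hw : LinearIndependent (ZMod 2) w) {L : List ℕ}
    (hL : ∀ k ∈ L, k < 2 ^ 5) (hSL : insert 0 S = codeSet v w L) (hcheck : codeCheck L = true) :
    ∃ b : Fin 5 → Fin 5 → ZMod 2, LinearIndependent (ZMod 2) b ∧ S = pentagonSet b := by
  obtain ⟨h0, hsum, hpair⟩ := minSat_iff.1 hS
  obtain ⟨z, hz, hzv⟩ := hSL.le (mem_insert 0 S)
  obtain rfl : v = bitSum w z := by rwa [← sub_eq_zero, ZModModule.sub_eq_add]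
  have hcovers : codeCovers 5 L = true := (codeCovers_iff hw (by simp) hL).2 (hSL ▸ hsum)
  have hunique (s : ℕ) (hs : s ∈ L) : s = z ∨ codeHasUniqueSum L s = true := by
    rw [codeHasUniqueSum_iff (v := bitSum w z) hw hL hs, ← hSL]
    rcases hSL.ge (mem_codeSet.2 ⟨s, hs, rfl⟩) with h | h
    · exact Or.inl (add_bitSum_injOn hw (hL s hs) (hL z hz) (h.trans hzv.symm))
    · exact Or.inr (hpair _ h)
  simp only [codeCheck, hcovers, List.all_eq_true, Bool.or_eq_true, Bool.not_eq_true',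
    Bool.not_true, Bool.false_eq_true, false_or, ← Bool.not_eq_true, Nat.beq_eq] at hcheck
  obtain ⟨b, hb⟩ :=
    exists_pentagonSet_of_codeIsPentagon ((hcheck z hz).resolve_left (not_not.2 hunique)) w
  rw [← codeSet_bitSum, ← hSL] at hb
  have hli := linearIndependent_of_pentagonSet (by simp) (hb ▸ hsum)
  refine ⟨b, hli, ?_⟩
  rw [← insert_sdiff_self_of_notMem h0, hb,
    insert_sdiff_self_of_notMem (zero_notMem_pentagonSet hli)]

theorem exists_eq_codeSet_filter_notMem {W : Type*} [AddCommGroup W] [Module (ZMod 2) W]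
    [Module.Finite (ZMod 2) W] (hW : finrank (ZMod 2) W = 4) {B : Set W} (hB : B.ncard = 11) :
    ∃ K ∈ fivePointCodes, ∃ (f : W) (e : Fin 4 → W), LinearIndependent (ZMod 2) e ∧
      B = codeSet f e ((List.range (2 ^ 4)).filter (· ∉ K)) := by
  have : Finite W := Module.finite_of_finite (ZMod 2)
  have hcard : Bᶜ.ncard = 5 := by
    have hadd := ncard_add_ncard_compl B
    rw [Module.natCard_eq_pow_finrank (K := ZMod 2), hW, hB, Nat.card_zmod] at hadd
    omega
  obtain ⟨K, hK, f, e, he, hBK⟩ := exists_frame hW hcard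
  refine ⟨K, hK, f, e, he, ?_⟩
  have hlt : ∀ K ∈ fivePointCodes, ∀ k ∈ K, k < 2 ^ 4 := by decide
  rw [← compl_codeSet he hW (hlt K hK), ← hBK, compl_compl]

theorem MinSat.exists_eq_codeSet (hS : MinSat S) (hcard : S.ncard = 11) :
    ∃ (v : Fin 5 → ZMod 2) (w : Fin 5 → Fin 5 → ZMod 2), LinearIndependent (ZMod 2) w ∧
      ∃ L, (∀ k ∈ L, k < 2 ^ 5) ∧ codeCheck L ∧ insert 0 S = codeSet v w L := by
  obtain ⟨h0, -, hpair⟩ := minSat_iff.1 hS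
  obtain ⟨s, hs⟩ : S.Nonempty := nonempty_of_ncard_ne_zero (by simp [hcard])
  obtain ⟨t, ht, hne, hst⟩ := hpair s hs
  have hx : s + t ≠ 0 := fun h => hne (by rwa [← ZModModule.sub_eq_add, sub_eq_zero, eq_comm] at h)
  let π := (Submodule.span (ZMod 2) {s + t}).mkQ
  have hπ : LinearMap.ker π = Submodule.span (ZMod 2) {s + t} := Submodule.ker_mkQ _
  have himage : (π '' insert 0 S).ncard = 11 := by
    have := hst.ncard_image (mem_insert_of_mem 0 hs) ht hne.symm (toFinite _) hπ
    rw [ncard_insert_of_notMem h0, hcard] at this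
    exact Nat.succ_injective this
  have hrank : finrank (ZMod 2) ((Fin 5 → ZMod 2) ⧸ Submodule.span (ZMod 2) {s + t}) = 4 := by
    have := Submodule.finrank_quotient_add_finrank (Submodule.span (ZMod 2) {s + t})
    rw [finrank_span_singleton hx, finrank_fin_fun] at this
    exact Nat.succ_injective this
  obtain ⟨K, hK, f, e, he, hKe⟩ := exists_eq_codeSet_filter_notMem hrank himage
  have hlt : ∀ k ∈ (List.range (2 ^ 4)).filter (· ∉ K), k < 2 ^ 4 := by simp +contextual
  have hzero : ∀ K ∈ fivePointCodes, 0 ∈ (List.range (2 ^ 4)).filter (· ∉ K) := by decide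
  have hpow : ∀ K ∈ fivePointCodes, ∀ i < 4, 2 ^ i ∈ (List.range (2 ^ 4)).filter (· ∉ K) := by
    decide
  obtain ⟨v, w, hw, l, hl, c, hc, hSl⟩ := hst.exists_eq_codeSet (mem_insert_of_mem 0 hs) ht
    hne.symm hπ he hKe hlt (hzero K hK) (hpow K hK)
  refine ⟨v, w, hw, _, ?_, codeCheck_of_mem_codeLifts hK hl hc, hSl⟩
  rintro k (_ | ⟨_, hk⟩)
  · exact Nat.xor_lt_two_pow (lt_of_mem_codeLifts hlt hl hc) (by norm_num)
  · exact lt_of_mem_codeLifts hlt hl hk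

theorem MinSat.exists_pentagonSet (hS : MinSat S) (hcard : S.ncard = 11) :
    ∃ b : Fin 5 → Fin 5 → ZMod 2, LinearIndependent (ZMod 2) b ∧ S = pentagonSet b := by
  obtain ⟨v, w, hw, L, hL, hcheck, hSL⟩ := hS.exists_eq_codeSet hcard
  exact hS.exists_pentagonSet_of_codeCheck hw hL hSL hcheck

end PG42

/-- Up to projective equivalence there is exactly one minimal 1-saturating set of size 11
in PG(4,2), and it is not a cap. -/
theorem minSat_PG4_size11_unique_not_cap :
    (∃ S : Set (Fin 5 → ZMod 2), MinSat S ∧ S.ncard = 11) ∧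
    (∀ S T : Set (Fin 5 → ZMod 2), MinSat S → MinSat T →
      S.ncard = 11 → T.ncard = 11 → ProjEquiv S T) ∧
    (∀ S : Set (Fin 5 → ZMod 2), MinSat S → S.ncard = 11 → ¬ IsCap S) := by
  refine ⟨?_, fun S T hS hT hScard hTcard => ?_, fun S hS hScard => ?_⟩
  · have hbasis := (Pi.basisFun (ZMod 2) (Fin 5)).linearIndependent
    exact ⟨_, minSat_pentagonSet hbasis, ncard_pentagonSet hbasis⟩
  · obtain ⟨b, hb, rfl⟩ := hS.exists_pentagonSet hScard
    obtain ⟨c, hc, rfl⟩ := hT.exists_pentagonSet hTcard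
    exact projEquiv_pentagonSet hb hc
  · obtain ⟨b, hb, rfl⟩ := hS.exists_pentagonSet hScard
    exact not_isCap_pentagonSet hb
end
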